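/- For every constant p ∈ (1,2), every set X of n points in ℓ_p space, and every sufficiently large t > 1, there exists an O(t)-spanner for X with lightness O((t^{1+p}/log² t)·n^{(log² t)/t^p}·log n) and with O(n^{1+(log² t)/t^p}·log n·log t) edges. -/

import Mathlib

open MeasureTheory

noncomputable section

/-- The distance function on unordered pairs of points. -/
def symDist {X : Type*} [MetricSpace X] : Sym2 X → ℝ :=
  Sym2.lift ⟨fun a b => dist a b, fun a b => dist_comm a b⟩

/-- The weight of a walk: the sum of the metric distances along its edges. -/
def walkWeight {X : Type*} [MetricSpace X] {G : SimpleGraph X} {u v : X}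
    (p : G.Walk u v) : ℝ :=
  (p.edges.map symDist).sum

/-- Shortest-path distance in a graph whose edges are weighted by the metric. -/
def spannerDist {X : Type*} [MetricSpace X] (G : SimpleGraph X) (u v : X) : ℝ :=
  sInf {c | ∃ p : G.Walk u v, walkWeight p = c}

/-- `G` is a `t`-spanner of the metric space `X`. -/
def IsSpanner {X : Type*} [MetricSpace X] (G : SimpleGraph X) (t : ℝ) : Prop :=
  ∀ u v : X, dist u v ≤ spannerDist G u v ∧ spannerDist G u v ≤ t * dist u v

/-- Total weight of a graph over a finite metric space. -/
def graphWeight {X : Type*} [MetricSpace X] [Fintype X] (G : SimpleGraph X) : ℝ :=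
  ∑ e ∈ G.edgeSet.toFinite.toFinset, symDist e

/-- Number of edges of a graph. -/
def edgeCount {X : Type*} (G : SimpleGraph X) : ℕ :=
  Nat.card G.edgeSet

/-- Weight of a minimum spanning tree of a finite metric space: the minimum total
weight of a connected graph on `X`. -/
def mstWeight (X : Type*) [MetricSpace X] [Fintype X] : ℝ :=
  sInf {c | ∃ G : SimpleGraph X, G.Connected ∧ graphWeight G = c}

/-- `D` is a `(t, Δ, δ)`-decomposition of the metric space `X`. -/
def IsDecomposition {X : Type*} [MetricSpace X] (t Δ δ : ℝ) (D : PMF (Setoid X)) : Prop :=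
  (∀ P ∈ D.support, ∀ x y : X, P.r x y → dist x y ≤ t * Δ) ∧
  (∀ x y : X, dist x y ≤ Δ → ENNReal.ofReal δ ≤ D.toOuterMeasure {P | P.r x y})

/-- A metric space `X` is `(t, δ)`-decomposable. -/
def IsDecomposable (X : Type*) [MetricSpace X] (t δ : ℝ) : Prop :=
  ∀ Δ : ℝ, 0 < Δ → ∃ D : PMF (Setoid X), IsDecomposition t Δ δ D

/-- `X` has doubling constant `lam`. -/
def HasDoublingConstant (X : Type*) [MetricSpace X] (lam : ℕ) : Prop :=
  ∀ (x : X) (r : ℝ), 0 < r → ∃ F : Finset X, F.card ≤ lam ∧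
    Metric.closedBall x (2 * r) ⊆ ⋃ y ∈ F, Metric.closedBall y r

/-- Weight of a walk in a weighted graph. -/
def wWalkWeight {V : Type*} {G : SimpleGraph V} (w : Sym2 V → ℝ) {u v : V}
    (p : G.Walk u v) : ℝ :=
  (p.edges.map w).sum

/-- Shortest-path distance in a weighted graph. -/
def wDist {V : Type*} (G : SimpleGraph V) (w : Sym2 V → ℝ) (u v : V) : ℝ :=
  sInf {c | ∃ p : G.Walk u v, wWalkWeight w p = c}

/-- Total edge weight of a weighted graph. -/
def wGraphWeight {V : Type*} [Fintype V] (G : SimpleGraph V) (w : Sym2 V → ℝ) : ℝ :=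
  ∑ e ∈ G.edgeSet.toFinite.toFinset, w e

/-- Weight of a minimum spanning tree of a weighted graph `G`: the least total weight
of a connected spanning subgraph of `G`. -/
def wMstWeight {V : Type*} [Fintype V] (G : SimpleGraph V) (w : Sym2 V → ℝ) : ℝ :=
  sInf {c | ∃ T : SimpleGraph V, T ≤ G ∧ T.Connected ∧ wGraphWeight T w = c}

/-- The setoid of elements lying on the same cycle of a permutation. -/
def sameCycleSetoid {α : Type*} (σ : Equiv.Perm α) : Setoid α :=
  ⟨σ.SameCycle, ⟨fun x => Equiv.Perm.SameCycle.refl σ x,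
    fun h => h.symm, fun h₁ h₂ => h₁.trans h₂⟩⟩

/-- The number of cycles (orbits) of a permutation. -/
def numCycles {α : Type*} (σ : Equiv.Perm α) : ℕ :=
  Nat.card (Quotient (sameCycleSetoid σ))

/-- The dart-reversal permutation of a graph. -/
def dartReversal {V : Type*} (G : SimpleGraph V) : Equiv.Perm G.Dart :=
  Function.Involutive.toPerm SimpleGraph.Dart.symm SimpleGraph.Dart.symm_involutive

/-- `σ` is a rotation system of `G`: it permutes darts, preserves tails, and is a single
cycle on the darts emanating from each fixed vertex. -/
def IsRotationSystem {V : Type*} (G : SimpleGraph V) (σ : Equiv.Perm G.Dart) : Prop :=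
  (∀ d : G.Dart, (σ d).toProd.1 = d.toProd.1) ∧
  (∀ d e : G.Dart, d.toProd.1 = e.toProd.1 → σ.SameCycle d e)

/-- `G` has (orientable) genus at most `g`: some rotation system, whose number of faces
is the number of cycles of the face permutation `σ * dartReversal G`, satisfies Euler's
formula `V - E + F ≥ 2 - 2g`. -/
def GenusLE {V : Type*} [Fintype V] (G : SimpleGraph V) (g : ℕ) : Prop :=
  ∃ σ : Equiv.Perm G.Dart, IsRotationSystem G σ ∧
    (2 : ℤ) - 2 * (g : ℤ) ≤
      (Fintype.card V : ℤ) - (Nat.card G.edgeSet : ℤ) + (numCycles (σ * dartReversal G) : ℤ)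

/-- `D` is a `(t, Δ, δ)`-strong-decomposition of the weighted graph `(G, w)`: clusters
have strong diameter at most `t·Δ`, and pairs at distance at most `Δ` are clustered
together with probability at least `δ`. -/
def IsStrongDecomposition {V : Type*} (G : SimpleGraph V) (w : Sym2 V → ℝ)
    (t Δ δ : ℝ) (D : PMF (Setoid V)) : Prop :=
  (∀ P ∈ D.support, ∀ u v : V, P.r u v →
      ∃ p : G.Walk u v, (∀ z ∈ p.support, P.r u z) ∧ wWalkWeight w p ≤ t * Δ) ∧
  (∀ u v : V, wDist G w u v ≤ Δ → ENNReal.ofReal δ ≤ D.toOuterMeasure {P | P.r u v})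

/-- A weighted graph is `(t, δ)`-strongly-decomposable. -/
def IsStronglyDecomposable {V : Type*} (G : SimpleGraph V) (w : Sym2 V → ℝ)
    (t δ : ℝ) : Prop :=
  ∀ Δ : ℝ, 0 < Δ → ∃ D : PMF (Setoid V), IsStrongDecomposition G w t Δ δ D

/-- `D` is an `(r, cr, p₁, p₂)`-sensitive LSH family for `X`. -/
def IsLSHFamily {X : Type*} {U : Type*} [MetricSpace X] (D : PMF (X → U))
    (r cr p₁ p₂ : ℝ) : Prop :=
  (∀ x y : X, dist x y ≤ r → ENNReal.ofReal p₁ ≤ D.toOuterMeasure {h | h x = h y}) ∧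
  (∀ x y : X, cr < dist x y → D.toOuterMeasure {h | h x = h y} ≤ ENNReal.ofReal p₂)

end

/-!
On a finite subset of `ℓ_p` with `p ≤ 2`, the function `dist ^ p` is up to a constant factor a
squared Euclidean distance: on the line, `|d| ^ p` is comparable to a weighted sum of
`1 - cos (2 ^ k d)` over `k`, and coordinates add up. A Gaussian kernel of this Euclidean distance
is, up to a square, the probability that a random set contains two given points. Tuned to scale
`Δ`, the random set separates pairs at distance more than `O(t Δ)` from pairs at distance at most
`Δ`, and region growing with such sets gives `m = O(n ^ (1 / (2 t ^ p)) log n)` partitions into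
pieces of diameter `O(t Δ)` which together cover all pairs at distance at most `Δ`.

At every scale `D / 2 ^ i`, where `D` is the weight of a minimum spanning tree, the spanner joins
each net point to the point of its piece that entered the nested nets first. A point that entered
`log₂ t + O(1)` scales earlier is its own center, so it contributes `O(m log t)` edges. A net of
`N` points of scale `r` forces an MST of weight `Ω(N r)`, so each scale has weight `O(m t D)`, and
beyond the first `log₂ n` scales the trivial bound of `n` edges per partition decays geometrically.
-/

open scoped Finset

section Snowflake

/-- The snowflake `dist ^ (p / 2)` of `X` embeds into a Euclidean space with squared distortion
`A`: this is how an `ℓ_p` metric is compared with a Hilbert space metric when `p ≤ 2`. -/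
def HasEuclideanSnowflake (X : Type*) [MetricSpace X] (p A : ℝ) : Prop :=
  ∃ (d : ℕ) (Φ : X → EuclideanSpace ℝ (Fin d)), ∀ x y,
    dist x y ^ p ≤ dist (Φ x) (Φ y) ^ 2 ∧ dist (Φ x) (Φ y) ^ 2 ≤ A * dist x y ^ p

lemma HasEuclideanSnowflake.of_sum_sq {X κ : Type*} [MetricSpace X] [Fintype κ] {p c C : ℝ}
    (hc : 0 < c) (Φ : X → κ → ℝ)
    (hΦ : ∀ x y, c * dist x y ^ p ≤ ∑ i, (Φ x i - Φ y i) ^ 2 ∧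
      ∑ i, (Φ x i - Φ y i) ^ 2 ≤ C * dist x y ^ p) :
    HasEuclideanSnowflake X p (C / c) := by
  let e := Fintype.equivFin κ
  let Ψ : X → EuclideanSpace ℝ (Fin (Fintype.card κ)) :=
    fun x => WithLp.toLp 2 fun j => √(1 / c) * Φ x (e.symm j)
  have hΨ : ∀ x y, dist (Ψ x) (Ψ y) ^ 2 = (∑ i, (Φ x i - Φ y i) ^ 2) / c := by
    intro x y
    calc dist (Ψ x) (Ψ y) ^ 2
        = ∑ j, (Φ x (e.symm j) - Φ y (e.symm j)) ^ 2 / c := by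
          rw [EuclideanSpace.dist_sq_eq]
          refine Finset.sum_congr rfl fun j _ => ?_
          rw [Real.dist_eq, sq_abs, ← mul_sub, mul_pow, Real.sq_sqrt (by positivity)]
          ring
      _ = (∑ i, (Φ x i - Φ y i) ^ 2) / c := by
          rw [← Finset.sum_div, e.symm.sum_comp fun i => (Φ x i - Φ y i) ^ 2]
  refine ⟨_, Ψ, fun x y => ?_⟩
  rw [hΨ, le_div_iff₀' hc, div_mul_eq_mul_div]
  exact ⟨(hΦ x y).1, div_le_div_of_nonneg_right (hΦ x y).2 hc.le⟩

lemma HasEuclideanSnowflake.exists_sum_sq {X : Type*} [MetricSpace X] {p A : ℝ}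
    (h : HasEuclideanSnowflake X p A) :
    ∃ (d : ℕ) (Φ : X → Fin d → ℝ), ∀ x y, dist x y ^ p ≤ ∑ i, (Φ x i - Φ y i) ^ 2 ∧
      ∑ i, (Φ x i - Φ y i) ^ 2 ≤ A * dist x y ^ p := by
  obtain ⟨d, Φ, hΦ⟩ := h
  refine ⟨d, fun x => (Φ x).ofLp, fun x y => ?_⟩
  simpa only [EuclideanSpace.dist_sq_eq, Real.dist_eq, sq_abs] using hΦ x y

lemma summable_zpow_mul_min {q : ℝ} (hq : 1 / 4 < q) (hq1 : q < 1) :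
    Summable fun j : ℤ => q ^ j * min (4 ^ j) 4 := by
  have hq0 : 0 < q := by linarith
  have hinv : (4 * q)⁻¹ < 1 := inv_lt_one_of_one_lt₀ (by linarith)
  refine Summable.of_nat_of_neg
    (.of_nonneg_of_le (fun n => by positivity) (fun n => ?_)
      ((summable_geometric_of_lt_one hq0.le hq1).mul_right 4))
    (.of_nonneg_of_le (fun n => by positivity) (fun n => ?_)
      (summable_geometric_of_lt_one (by positivity) hinv))
  · rw [zpow_natCast]
    exact mul_le_mul_of_nonneg_left (min_le_right _ _) (by positivity)
  · calc q ^ (-n : ℤ) * min (4 ^ (-n : ℤ)) 4 ≤ q ^ (-n : ℤ) * 4 ^ (-n : ℤ) :=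
          mul_le_mul_of_nonneg_left (min_le_left _ _) (by positivity)
      _ = ((4 * q)⁻¹) ^ n := by
          rw [← mul_zpow, zpow_neg, zpow_natCast, inv_pow, mul_comm]

lemma exists_two_zpow_mul_mem_Icc {a : ℝ} (ha : 0 < a) :
    ∃ k : ℤ, (2 : ℝ) ^ k * a ∈ Set.Icc (1 / 2) 1 := by
  obtain ⟨n, hn, hn'⟩ := exists_mem_Ico_zpow ha one_lt_two
  refine ⟨-(n + 1), ?_, ?_⟩ <;> rw [zpow_neg]
  · rw [zpow_add_one₀ two_ne_zero, mul_inv, mul_assoc, le_inv_mul_iff₀ (by positivity)]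
    linarith
  · exact inv_mul_le_one_of_le₀ hn'.le (by positivity)

lemma two_sub_two_mul_cos_le_sq (x : ℝ) : 2 - 2 * Real.cos x ≤ x ^ 2 := by
  linarith [Real.one_sub_sq_div_two_le_cos (x := x)]

lemma sq_div_four_le_two_sub_two_mul_cos {x : ℝ} (hx : |x| ≤ 1) :
    x ^ 2 / 4 ≤ 2 - 2 * Real.cos x := by
  have hcos := Real.cos_le_one_sub_mul_cos_sq (hx.trans (by linarith [Real.pi_gt_three]))
  have hpi : 1 / 8 ≤ 2 / Real.pi ^ 2 :=
    (div_le_div_iff₀ (by norm_num) (by positivity)).2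
      (by nlinarith [Real.pi_lt_four, Real.pi_pos])
  nlinarith [mul_le_mul_of_nonneg_right hpi (sq_nonneg x)]

lemma sum_zpow_mul_cos_le {q d : ℝ} (hq : 1 / 4 < q) (hq1 : q < 1) {k₀ : ℤ}
    (hk₀ : (2 : ℝ) ^ k₀ * |d| ≤ 1) (K : Finset ℤ) :
    ∑ k ∈ K, q ^ k * (2 - 2 * Real.cos (2 ^ k * d)) ≤
      q ^ k₀ * ∑' j : ℤ, q ^ j * min (4 ^ j) 4 := by
  have hq0 : 0 < q := by linarith
  let f : ℤ → ℝ := fun j => q ^ j * min (4 ^ j) 4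
  have hterm : ∀ k ∈ K, q ^ k * (2 - 2 * Real.cos (2 ^ k * d)) ≤ q ^ k₀ * f (k - k₀) := by
    intro k _
    have hsq : (2 ^ k * d) ^ 2 ≤ (4 : ℝ) ^ (k - k₀) :=
      calc (2 ^ k * d) ^ 2 = (4 : ℝ) ^ (k - k₀) * ((2 : ℝ) ^ k₀ * |d|) ^ 2 := by
            rw [zpow_sub₀ (by norm_num), show (4 : ℝ) = 2 * 2 by norm_num, mul_zpow, mul_zpow,
              mul_pow, mul_pow, sq_abs]
            field_simp
        _ ≤ (4 : ℝ) ^ (k - k₀) :=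
            mul_le_of_le_one_right (by positivity) (pow_le_one₀ (by positivity) hk₀)
    calc q ^ k * (2 - 2 * Real.cos (2 ^ k * d)) ≤ q ^ k * min (4 ^ (k - k₀)) 4 :=
          mul_le_mul_of_nonneg_left (le_min ((two_sub_two_mul_cos_le_sq _).trans hsq)
            (by linarith [Real.neg_one_le_cos (2 ^ k * d)])) (by positivity)
      _ = q ^ k₀ * f (k - k₀) := by rw [← mul_assoc, ← zpow_add₀ hq0.ne', add_sub_cancel]
  have hf : Summable fun k => f (k - k₀) :=
    (Equiv.subRight k₀).summable_iff.2 (summable_zpow_mul_min hq hq1)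
  calc ∑ k ∈ K, q ^ k * (2 - 2 * Real.cos (2 ^ k * d)) ≤ ∑ k ∈ K, q ^ k₀ * f (k - k₀) :=
        Finset.sum_le_sum hterm
    _ ≤ q ^ k₀ * ∑' k, f (k - k₀) := by
        rw [← Finset.mul_sum]
        exact mul_le_mul_of_nonneg_left
          (hf.sum_le_tsum K fun k _ => by positivity) (by positivity)
    _ = q ^ k₀ * ∑' j, f j := by rw [← (Equiv.subRight k₀).tsum_eq f]; rfl

lemma rpow_neg_zpow_eq {p : ℝ} (k : ℤ) : ((2 : ℝ) ^ (-p)) ^ k = ((2 : ℝ) ^ k)⁻¹ ^ p := by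
  rw [← Real.rpow_intCast, ← Real.rpow_mul zero_le_two, ← zpow_neg, ← Real.rpow_intCast,
    ← Real.rpow_mul zero_le_two]
  push_cast
  ring_nf

lemma exists_sum_one_sub_cos_bounds {p : ℝ} (hp0 : 0 < p) (hp2 : p < 2) :
    ∃ C : ℝ, 0 < C ∧ ∀ D : Finset ℝ, ∃ K : Finset ℤ, ∀ d ∈ D,
      1 / 16 * |d| ^ p ≤ ∑ k ∈ K, ((2 : ℝ) ^ (-p)) ^ k * (2 - 2 * Real.cos (2 ^ k * d)) ∧
      ∑ k ∈ K, ((2 : ℝ) ^ (-p)) ^ k * (2 - 2 * Real.cos (2 ^ k * d)) ≤ C * |d| ^ p := by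
  have hq1 : (2 : ℝ) ^ (-p) < 1 := Real.rpow_lt_one_of_one_lt_of_neg one_lt_two (by linarith)
  have hq : 1 / 4 < (2 : ℝ) ^ (-p) :=
    calc (1 / 4 : ℝ) = 2 ^ (-2 : ℝ) := by rw [Real.rpow_neg zero_le_two]; norm_num
      _ < 2 ^ (-p) := Real.rpow_lt_rpow_of_exponent_lt one_lt_two (by linarith)
  have hS : 0 < ∑' j : ℤ, ((2 : ℝ) ^ (-p)) ^ j * min (4 ^ j) 4 :=
    (summable_zpow_mul_min hq hq1).tsum_pos (fun j => by positivity) 0 (by positivity)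
  choose! scale hscale using fun d : ℝ => fun hd : 0 < |d| => exists_two_zpow_mul_mem_Icc hd
  refine ⟨2 ^ p * ∑' j : ℤ, ((2 : ℝ) ^ (-p)) ^ j * min (4 ^ j) 4, by positivity,
    fun D => ⟨D.image scale, fun d hd => ?_⟩⟩
  rcases eq_or_ne d 0 with rfl | hd0
  · simp [Real.zero_rpow hp0.ne']
  obtain ⟨hlow, hup⟩ := hscale d (abs_pos.2 hd0)
  constructor
  · calc 1 / 16 * |d| ^ p
        ≤ ((2 : ℝ) ^ (-p)) ^ scale d * (1 / 16) := by
          rw [rpow_neg_zpow_eq, mul_comm]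
          gcongr
          rwa [← one_div, le_div_iff₀' (by positivity)]
      _ ≤ ((2 : ℝ) ^ (-p)) ^ scale d * (2 - 2 * Real.cos (2 ^ scale d * d)) := by
          gcongr
          have habs : |(2 : ℝ) ^ scale d * d| = 2 ^ scale d * |d| := by
            rw [abs_mul, abs_of_pos (by positivity)]
          refine le_trans ?_ (sq_div_four_le_two_sub_two_mul_cos (habs ▸ hup))
          rw [← sq_abs, habs]
          nlinarith
      _ ≤ _ := Finset.single_le_sum
          (f := fun k => ((2 : ℝ) ^ (-p)) ^ k * (2 - 2 * Real.cos (2 ^ k * d)))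
          (fun k _ => mul_nonneg (by positivity) (by linarith [Real.cos_le_one (2 ^ k * d)]))
          (Finset.mem_image_of_mem scale hd)
  · refine (sum_zpow_mul_cos_le hq hq1 hup _).trans ?_
    rw [mul_right_comm]
    gcongr
    rw [rpow_neg_zpow_eq, ← Real.mul_rpow zero_le_two (abs_nonneg d)]
    gcongr
    rw [inv_le_iff_one_le_mul₀ (by positivity)]
    linarith

lemma sq_cos_sub_cos_add_sq_sin_sub_sin (a b : ℝ) :
    (Real.cos a - Real.cos b) ^ 2 + (Real.sin a - Real.sin b) ^ 2 = 2 - 2 * Real.cos (a - b) := by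
  rw [Real.cos_sub]
  linear_combination Real.sin_sq_add_cos_sq a + Real.sin_sq_add_cos_sq b

lemma exists_hasEuclideanSnowflake_real {p : ℝ} (hp0 : 0 < p) (hp2 : p ≤ 2) :
    ∃ A : ℝ, 0 < A ∧ ∀ F : Finset ℝ, HasEuclideanSnowflake F p A := by
  rcases hp2.eq_or_lt with rfl | hp2
  · refine ⟨1, one_pos, fun F => ?_⟩
    have h := HasEuclideanSnowflake.of_sum_sq (X := F) (κ := Unit) (p := 2) (C := 1) one_pos
      (fun x _ => x) (fun x y => by simp [Subtype.dist_eq, Real.dist_eq])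
    rwa [div_one] at h
  obtain ⟨C, hC, hK⟩ := exists_sum_one_sub_cos_bounds hp0 hp2
  refine ⟨C / (1 / 16), by positivity, fun F => ?_⟩
  obtain ⟨K, hK⟩ := hK ((F ×ˢ F).image fun z => z.1 - z.2)
  refine .of_sum_sq (κ := K × Bool) (by norm_num)
    (fun x i => √(((2 : ℝ) ^ (-p)) ^ (i.1 : ℤ)) *
      bif i.2 then Real.cos (2 ^ (i.1 : ℤ) * x) else Real.sin (2 ^ (i.1 : ℤ) * x)) fun x y => ?_
  rw [Subtype.dist_eq, Real.dist_eq]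
  convert hK (x - y) (Finset.mem_image_of_mem _ (Finset.mk_mem_product x.2 y.2)) using 2
  all_goals
    rw [Fintype.sum_prod_type, ← Finset.sum_coe_sort K]
    congr! 1
    rw [Fintype.sum_bool, cond_true, cond_true, cond_false, cond_false, ← mul_sub, ← mul_sub,
      mul_pow, mul_pow, Real.sq_sqrt (by positivity), ← mul_add,
      sq_cos_sub_cos_add_sq_sin_sub_sin, mul_sub (_ ^ _ : ℝ) (x : ℝ)]

lemma HasEuclideanSnowflake.of_coordinates {X κ : Type*} [MetricSpace X] [Finite X] [Fintype κ]
    {p A c : ℝ} (hA : 0 ≤ A) (hc : 0 < c)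
    (hreal : ∀ F : Finset ℝ, HasEuclideanSnowflake F p A) (f : κ → X → ℝ)
    (hf : ∀ x y, c * dist x y ^ p ≤ ∑ i, |f i x - f i y| ^ p ∧
      ∑ i, |f i x - f i y| ^ p ≤ dist x y ^ p) :
    HasEuclideanSnowflake X p (A / c) := by
  have hmem : ∀ i x, f i x ∈ (Set.finite_range (f i)).toFinset := fun i x => by simp
  choose d Φ hΦ using fun i => (hreal (Set.finite_range (f i)).toFinset).exists_sum_sq
  refine .of_sum_sq (κ := Σ i, Fin (d i)) hc (fun x j => Φ j.1 ⟨f j.1 x, hmem j.1 x⟩ j.2)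
    fun x y => ?_
  rw [Fintype.sum_sigma]
  constructor
  · exact (hf x y).1.trans (Finset.sum_le_sum fun i _ =>
      (hΦ i ⟨f i x, hmem i x⟩ ⟨f i y, hmem i y⟩).1)
  · calc ∑ i, ∑ j, (Φ i ⟨f i x, hmem i x⟩ j - Φ i ⟨f i y, hmem i y⟩ j) ^ 2
        ≤ ∑ i, A * |f i x - f i y| ^ p := Finset.sum_le_sum fun i _ => (hΦ i _ _).2
      _ ≤ A * dist x y ^ p := by
          rw [← Finset.mul_sum]
          exact mul_le_mul_of_nonneg_left (hf x y).2 hA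

lemma exists_finset_half_dist_rpow_le {ι : Type*} {p : ℝ} [Fact (1 ≤ ENNReal.ofReal p)]
    (hp0 : 0 < p) (s : Finset (lp (fun _ : ι => ℝ) (ENNReal.ofReal p))) :
    ∃ N : Finset ι, ∀ x y : s,
      1 / 2 * dist x y ^ p ≤ ∑ i ∈ N, |x.1 i - y.1 i| ^ p ∧
      ∑ i ∈ N, |x.1 i - y.1 i| ^ p ≤ dist x y ^ p := by
  have hsum : ∀ x y : s, HasSum (fun i => |x.1 i - y.1 i| ^ p) (dist x y ^ p) := by
    intro x y
    have hp := ENNReal.toReal_ofReal hp0.le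
    simpa [hp, Subtype.dist_eq, dist_eq_norm] using
      lp.hasSum_norm (hp0.trans_eq hp.symm) (x.1 - y.1)
  have hev : ∀ x y : s, ∀ᶠ N in Filter.atTop,
      1 / 2 * dist x y ^ p ≤ ∑ i ∈ N, |x.1 i - y.1 i| ^ p := by
    intro x y
    rcases eq_or_ne x y with rfl | hxy
    · simp [Real.zero_rpow hp0.ne']
    · have hpos : 0 < dist x y ^ p := Real.rpow_pos_of_pos (dist_pos.2 hxy) p
      exact (hsum x y).eventually (eventually_ge_nhds (by linarith))
  obtain ⟨N, hN⟩ := (Filter.eventually_all.2 fun x => Filter.eventually_all.2 (hev x)).exists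
  exact ⟨N, fun x y => ⟨hN x y, sum_le_hasSum N (fun i _ => by positivity) (hsum x y)⟩⟩

lemma exists_hasEuclideanSnowflake_lp {p : ℝ} (hp2 : p ≤ 2) [Fact (1 ≤ ENNReal.ofReal p)]
    (ι : Type*) :
    ∃ A : ℝ, ∀ s : Finset (lp (fun _ : ι => ℝ) (ENNReal.ofReal p)),
      HasEuclideanSnowflake s p A := by
  have hp0 : 0 < p := one_pos.trans_le (ENNReal.one_le_ofReal.1 Fact.out)
  obtain ⟨A, hA, hreal⟩ := exists_hasEuclideanSnowflake_real hp0 hp2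
  refine ⟨A / (1 / 2), fun s => ?_⟩
  obtain ⟨N, hN⟩ := exists_finset_half_dist_rpow_le hp0 s
  refine .of_coordinates hA.le one_half_pos hreal (fun (i : N) (x : s) => x.1 i) fun x y => ?_
  rw [Finset.sum_coe_sort N fun i => |x.1 i - y.1 i| ^ p]
  exact hN x y

end Snowflake

section RandomSet

/-- The total weight of the finite sets containing both `x` and `y`. A weight function `w` with
`pairWeight w x x = 1` is used like the law of a random subset of `X`, normalised so that the
point-inclusion weights, rather than the total mass, equal `1`. -/
def pairWeight {X : Type*} [Fintype X] [DecidableEq X] (w : Finset X → ℝ) (x y : X) : ℝ :=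
  ∑ A with x ∈ A ∧ y ∈ A, w A

variable {X : Type*} [Fintype X] [DecidableEq X]

lemma pairWeight_sum {Ω : Type*} (s : Finset Ω) (w : Ω → Finset X → ℝ) (x y : X) :
    pairWeight (∑ ω ∈ s, w ω) x y = ∑ ω ∈ s, pairWeight (w ω) x y := by
  simp only [pairWeight, Finset.sum_apply]
  exact Finset.sum_comm

lemma pairWeight_add_single (w : Finset X → ℝ) (P : Finset X) (m : ℝ) (x y : X) :
    pairWeight (w + Pi.single P m) x y =
      pairWeight w x y + if x ∈ P ∧ y ∈ P then m else 0 := by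
  simp only [pairWeight, Pi.add_apply, Finset.sum_add_distrib, Finset.sum_pi_single',
    Finset.mem_filter_univ]

lemma sum_mul_card_filter_mem {κ : Type*} (w : Finset X → ℝ) (T : Finset κ) (u v : κ → X) :
    ∑ A, w A * (#{q ∈ T | u q ∈ A ∧ v q ∈ A} : ℝ) = ∑ q ∈ T, pairWeight w (u q) (v q) := by
  simp only [pairWeight, Finset.card_filter, Nat.cast_sum, Finset.mul_sum, Finset.sum_filter]
  rw [Finset.sum_comm]
  refine Finset.sum_congr rfl fun q _ => Finset.sum_congr rfl fun A _ => ?_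
  split_ifs <;> simp

/-- The weights of the superlevel sets `{x | u < f x}`, obtained by peeling off the lowest one. -/
lemma exists_pairWeight_eq_min (f : X → ℝ) (hf : ∀ x, 0 ≤ f x) :
    ∃ w : Finset X → ℝ, (∀ A, 0 ≤ w A) ∧ ∀ x y, pairWeight w x y = min (f x) (f y) := by
  induction hk : #{x | 0 < f x} using Nat.strong_induction_on generalizing f with
  | _ k ih =>
  set P : Finset X := {x | 0 < f x} with hP
  have hmemP : ∀ x, x ∈ P ↔ 0 < f x := fun x => by simp [hP]
  rcases P.eq_empty_or_nonempty with hempty | hne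
  · have hf0 : ∀ x, f x = 0 := fun x =>
      le_antisymm (not_lt.1 fun hx => by simpa [hempty] using (hmemP x).2 hx) (hf x)
    exact ⟨0, fun _ => le_rfl, fun x y => by simp [pairWeight, hf0]⟩
  obtain ⟨z, hz, hmin⟩ := P.exists_min_image f hne
  have hz0 := (hmemP z).1 hz
  let f' : X → ℝ := fun x => if x ∈ P then f x - f z else 0
  have hf' : ∀ x, 0 ≤ f' x := fun x => by
    by_cases hx : x ∈ P
    · simpa [f', hx] using hmin x hx
    · simp [f', hx]
  have hsub : ({x | 0 < f' x} : Finset X) ⊂ P := by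
    refine (Finset.ssubset_iff_of_subset fun x hx => ?_).2 ⟨z, hz, by simp [f']⟩
    by_contra hxP
    simp [f', hxP] at hx
  obtain ⟨w, hw, hmin'⟩ := ih _ (hk ▸ Finset.card_lt_card hsub) f' hf' rfl
  refine ⟨w + Pi.single P (f z), fun A => ?_, fun x y => ?_⟩
  · have := hw A
    rw [Pi.add_apply, Pi.single_apply]
    positivity
  · rw [pairWeight_add_single, hmin']
    have hnot : ∀ x, x ∉ P → f x = 0 := fun x hx =>
      le_antisymm (not_lt.1 (mt (hmemP x).2 hx)) (hf x)
    by_cases hx : x ∈ P <;> by_cases hy : y ∈ P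
    · simp only [f', hx, hy, and_self, if_true]
      rw [← min_add_add_right, sub_add_cancel, sub_add_cancel]
    · simp [f', hx, hy, hnot y hy, hf x, hmin x hx]
    · simp [f', hx, hy, hnot x hx, hf y, hmin y hy]
    · simp [f', hx, hy, hnot x hx, hnot y hy]

lemma sum_min_sq_le_sum_mul {Ω : Type*} [Fintype Ω] {a b : Ω → ℝ} (ha : ∀ ω, 0 ≤ a ω)
    (hb : ∀ ω, 0 ≤ b ω) : ∑ ω, min (a ω ^ 2) (b ω ^ 2) ≤ ∑ ω, a ω * b ω := by
  refine Finset.sum_le_sum fun ω _ => ?_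
  rcases le_total (a ω) (b ω) with hab | hab
  · exact (min_le_left _ _).trans (by nlinarith [ha ω])
  · exact (min_le_right _ _).trans (by nlinarith [hb ω])

lemma sq_sum_mul_le_two_mul_sum_min_sq {Ω : Type*} [Fintype Ω] {a b : Ω → ℝ}
    (ha : ∑ ω, a ω ^ 2 = 1) (hb : ∑ ω, b ω ^ 2 = 1) :
    (∑ ω, a ω * b ω) ^ 2 ≤ 2 * ∑ ω, min (a ω ^ 2) (b ω ^ 2) := by
  have hmin : ∀ ω, 0 ≤ min (a ω ^ 2) (b ω ^ 2) := fun ω => by positivity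
  have hmax : ∑ ω, max (a ω ^ 2) (b ω ^ 2) ≤ 2 :=
    calc ∑ ω, max (a ω ^ 2) (b ω ^ 2) ≤ ∑ ω, (a ω ^ 2 + b ω ^ 2) :=
          Finset.sum_le_sum fun ω _ => max_le_add_of_nonneg (sq_nonneg _) (sq_nonneg _)
      _ = 2 := by rw [Finset.sum_add_distrib, ha, hb]; norm_num
  calc (∑ ω, a ω * b ω) ^ 2
      ≤ (∑ ω, min (a ω ^ 2) (b ω ^ 2)) * ∑ ω, max (a ω ^ 2) (b ω ^ 2) :=
        Finset.sum_sq_le_sum_mul_sum_of_sq_le_mul _ (fun ω _ => hmin ω)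
          (fun ω _ => (sq_nonneg _).trans (le_max_left _ _))
          (fun ω _ => by rw [min_mul_max, mul_pow])
    _ ≤ 2 * ∑ ω, min (a ω ^ 2) (b ω ^ 2) := by
        rw [mul_comm]
        exact mul_le_mul_of_nonneg_right hmax (Finset.sum_nonneg fun ω _ => hmin ω)

lemma exists_pairWeight_of_unit_vectors {Ω : Type*} [Fintype Ω] (g : X → Ω → ℝ)
    (hg : ∀ x ω, 0 ≤ g x ω) (hunit : ∀ x, ∑ ω, g x ω ^ 2 = 1) :
    ∃ w : Finset X → ℝ, (∀ A, 0 ≤ w A) ∧ (∀ x, pairWeight w x x = 1) ∧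
      ∀ x y, (∑ ω, g x ω * g y ω) ^ 2 ≤ 2 * pairWeight w x y ∧
        pairWeight w x y ≤ ∑ ω, g x ω * g y ω := by
  choose w hw hmin using fun ω => exists_pairWeight_eq_min (fun x => g x ω ^ 2)
    (fun x => sq_nonneg _)
  have hpair : ∀ x y, pairWeight (∑ ω, w ω) x y = ∑ ω, min (g x ω ^ 2) (g y ω ^ 2) :=
    fun x y => by simp only [pairWeight_sum, hmin]
  refine ⟨∑ ω, w ω, fun A => ?_, fun x => ?_, fun x y => ?_⟩
  · rw [Finset.sum_apply]
    exact Finset.sum_nonneg fun ω _ => hw ω A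
  · simpa only [hpair, min_self] using hunit x
  · rw [hpair]
    exact ⟨sq_sum_mul_le_two_mul_sum_min_sq (hunit x) (hunit y),
      sum_min_sq_le_sum_mul (hg x) (hg y)⟩

lemma exp_neg_sq_le_cos {d : ℝ} (hd : |d| ≤ 1) : Real.exp (-d ^ 2) ≤ Real.cos d := by
  have hd2 : d ^ 2 ≤ 1 := (sq_le_one_iff_abs_le_one d).2 hd
  calc Real.exp (-d ^ 2) = (Real.exp (d ^ 2))⁻¹ := Real.exp_neg _
    _ ≤ (d ^ 2 + 1)⁻¹ := by gcongr; exact Real.add_one_le_exp _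
    _ ≤ 1 - d ^ 2 / 2 := by rw [inv_le_iff_one_le_mul₀ (by positivity)]; nlinarith [sq_nonneg d]
    _ ≤ Real.cos d := Real.one_sub_sq_div_two_le_cos

lemma cos_le_exp_neg_sq_div_eight {d : ℝ} (hd : |d| ≤ 1) :
    Real.cos d ≤ Real.exp (-d ^ 2 / 8) := by
  linarith [sq_div_four_le_two_sub_two_mul_cos hd, Real.add_one_le_exp (-d ^ 2 / 8)]

/-- The tensor product of the unit vectors `(cos (π / 4 + ψ i), sin (π / 4 + ψ i))`. The offset
`π / 4` keeps the entries nonnegative for small angles `ψ i`. -/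
noncomputable def angleTensor {ι : Type*} [Fintype ι] (ψ : ι → ℝ) (ω : ι → Bool) : ℝ :=
  ∏ i, bif ω i then Real.cos (Real.pi / 4 + ψ i) else Real.sin (Real.pi / 4 + ψ i)

lemma angleTensor_nonneg {ι : Type*} [Fintype ι] {ψ : ι → ℝ} (hψ : ∀ i, |ψ i| ≤ 1 / 2)
    (ω : ι → Bool) : 0 ≤ angleTensor ψ ω := by
  refine Finset.prod_nonneg fun i _ => ?_
  obtain ⟨hlow, hup⟩ := abs_le.1 (hψ i)
  have hpi := Real.pi_gt_three
  cases ω i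
  · exact Real.sin_nonneg_of_mem_Icc ⟨by linarith, by linarith⟩
  · exact Real.cos_nonneg_of_mem_Icc ⟨by linarith, by linarith⟩

lemma sum_angleTensor_mul {ι : Type*} [Fintype ι] [DecidableEq ι] (ψ φ : ι → ℝ) :
    ∑ ω, angleTensor ψ ω * angleTensor φ ω = ∏ i, Real.cos (ψ i - φ i) := by
  simp only [angleTensor, ← Finset.prod_mul_distrib]
  rw [← Fintype.prod_sum fun i b =>
    (bif b then Real.cos (Real.pi / 4 + ψ i) else Real.sin (Real.pi / 4 + ψ i)) *
      bif b then Real.cos (Real.pi / 4 + φ i) else Real.sin (Real.pi / 4 + φ i)]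
  refine Finset.prod_congr rfl fun i _ => ?_
  rw [Fintype.sum_bool, cond_true, cond_true, cond_false, cond_false, ← Real.cos_sub,
    add_sub_add_left_eq_sub]

lemma exists_pairWeight_exp_of_small {ι : Type*} [Fintype ι] (ψ : X → ι → ℝ)
    (hψ : ∀ x i, |ψ x i| ≤ 1 / 2) :
    ∃ w : Finset X → ℝ, (∀ A, 0 ≤ w A) ∧ (∀ x, pairWeight w x x = 1) ∧
      ∀ x y, Real.exp (-2 * ∑ i, (ψ x i - ψ y i) ^ 2) ≤ 2 * pairWeight w x y ∧
        pairWeight w x y ≤ Real.exp (-(∑ i, (ψ x i - ψ y i) ^ 2) / 8) := by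
  classical
  obtain ⟨w, hw, hunit, hpair⟩ := exists_pairWeight_of_unit_vectors (fun x => angleTensor (ψ x))
    (fun x => angleTensor_nonneg (hψ x)) (fun x => by simp [sq, sum_angleTensor_mul])
  have hd : ∀ x y i, |ψ x i - ψ y i| ≤ 1 := fun x y i =>
    (abs_sub (ψ x i) (ψ y i)).trans (by linarith [hψ x i, hψ y i])
  simp only [sum_angleTensor_mul] at hpair
  refine ⟨w, hw, hunit, fun x y => ⟨le_trans ?_ (hpair x y).1, (hpair x y).2.trans ?_⟩⟩
  · calc Real.exp (-2 * ∑ i, (ψ x i - ψ y i) ^ 2)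
        = (∏ i, Real.exp (-(ψ x i - ψ y i) ^ 2)) ^ 2 := by
          rw [← Real.exp_sum, ← Real.exp_nat_mul, Finset.sum_neg_distrib]
          push_cast
          ring_nf
      _ ≤ (∏ i, Real.cos (ψ x i - ψ y i)) ^ 2 := by
          gcongr with i
          exact exp_neg_sq_le_cos (hd x y i)
  · calc ∏ i, Real.cos (ψ x i - ψ y i) ≤ ∏ i, Real.exp (-(ψ x i - ψ y i) ^ 2 / 8) :=
          Finset.prod_le_prod
            (fun i _ => (Real.exp_pos _).le.trans (exp_neg_sq_le_cos (hd x y i)))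
            fun i _ => cos_le_exp_neg_sq_div_eight (hd x y i)
      _ = Real.exp (-(∑ i, (ψ x i - ψ y i) ^ 2) / 8) := by
          rw [← Real.exp_sum, ← Finset.sum_neg_distrib, Finset.sum_div]

lemma exists_pairWeight_exp {ι : Type*} [Fintype ι] (ψ : X → ι → ℝ) :
    ∃ w : Finset X → ℝ, (∀ A, 0 ≤ w A) ∧ (∀ x, pairWeight w x x = 1) ∧
      ∀ x y, Real.exp (-2 * ∑ i, (ψ x i - ψ y i) ^ 2) ≤ 2 * pairWeight w x y ∧
        pairWeight w x y ≤ Real.exp (-(∑ i, (ψ x i - ψ y i) ^ 2) / 8) := by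
  obtain ⟨B, hB⟩ := (Set.finite_range fun z : X × ι => |ψ z.1 z.2|).bddAbove
  obtain ⟨m, hm⟩ := exists_nat_gt (max 0 (2 * B))
  have hm0 : (0 : ℝ) < m := (le_max_left _ _).trans_lt hm
  -- Replacing a coordinate by `m ^ 2` copies of its `m`-th part makes the angles small.
  have hsplit : ∀ x y, ∑ i : ι × Fin (m ^ 2), (ψ x i.1 / m - ψ y i.1 / m) ^ 2 =
      ∑ i, (ψ x i - ψ y i) ^ 2 := by
    intro x y
    rw [Fintype.sum_prod_type]
    refine Finset.sum_congr rfl fun i _ => ?_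
    simp only [← sub_div, div_pow, Finset.sum_const, Finset.card_univ, Fintype.card_fin,
      nsmul_eq_mul, Nat.cast_pow]
    exact mul_div_cancel₀ _ (by positivity)
  have hsmall : ∀ x (i : ι × Fin (m ^ 2)), |ψ x i.1 / m| ≤ 1 / 2 := fun x i => by
    rw [abs_div, abs_of_pos hm0, div_le_iff₀ hm0]
    linarith [hB ⟨(x, i.1), rfl⟩, le_max_right 0 (2 * B)]
  simpa only [hsplit] using exists_pairWeight_exp_of_small _ hsmall

end RandomSet

lemma HasEuclideanSnowflake.exists_pairWeight {X : Type*} [MetricSpace X] [Fintype X]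
    [DecidableEq X] {p A μ : ℝ} (h : HasEuclideanSnowflake X p A) (hμ : 0 ≤ μ) :
    ∃ w : Finset X → ℝ, (∀ B, 0 ≤ w B) ∧ (∀ x, pairWeight w x x = 1) ∧
      ∀ x y, Real.exp (-(16 * A * (μ * dist x y ^ p))) ≤ 2 * pairWeight w x y ∧
        pairWeight w x y ≤ Real.exp (-(μ * dist x y ^ p)) := by
  obtain ⟨d, Φ, hΦ⟩ := h.exists_sum_sq
  obtain ⟨w, hw, hunit, hpair⟩ := exists_pairWeight_exp fun x i => √(8 * μ) * Φ x i
  have hscale : ∀ x y, ∑ i, (√(8 * μ) * Φ x i - √(8 * μ) * Φ y i) ^ 2 =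
      8 * μ * ∑ i, (Φ x i - Φ y i) ^ 2 := fun x y => by
    simp only [← mul_sub, mul_pow, Real.sq_sqrt (show 0 ≤ 8 * μ by positivity), Finset.mul_sum]
  simp only [hscale] at hpair
  refine ⟨w, hw, hunit, fun x y => ⟨le_trans ?_ (hpair x y).1, (hpair x y).2.trans ?_⟩⟩ <;>
    rw [Real.exp_le_exp]
  · linarith [mul_le_mul_of_nonneg_left (hΦ x y).2 hμ]
  · linarith [mul_le_mul_of_nonneg_left (hΦ x y).1 hμ]

section PartitionCover

/-- The coloring `h` encodes a partition of `X` into color classes of diameter at most `R`. -/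
def IsBoundedColoring {X : Type*} [MetricSpace X] (R : ℝ) (h : X → ℕ) : Prop :=
  ∀ x y, h x = h y → dist x y ≤ R

/-- `X` has `m` partitions into pieces of diameter at most `R` such that every two points at
distance at most `Δ` lie in a common piece of one of them. This is the derandomized form of a
decomposition with padding probability about `1 / m`. -/
def HasPartitionCover (X : Type*) [MetricSpace X] (m : ℕ) (R Δ : ℝ) : Prop :=
  ∃ h : Fin m → X → ℕ, (∀ j, IsBoundedColoring R (h j)) ∧
    ∀ x y, dist x y ≤ Δ → ∃ j, h j x = h j y

variable {X : Type*} [MetricSpace X]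

lemma exists_pair_forall_dist_le_of_card_lt [DecidableEq X] {A : Finset X} {S : Finset (X × X)}
    {T : Finset ((X × X) × X)} {ρ : ℝ} (hT : ∀ q ∈ S, ∀ z, ρ < dist q.1 z → (q, z) ∈ T)
    (hlt : #{t ∈ T | t.1.1 ∈ A ∧ t.2 ∈ A} < #{q ∈ S | q.1 ∈ A ∧ q.2 ∈ A}) :
    ∃ q ∈ S, (q.1 ∈ A ∧ q.2 ∈ A) ∧ ∀ z ∈ A, dist q.1 z ≤ ρ := by
  by_contra! hfar
  have hsub : {q ∈ S | q.1 ∈ A ∧ q.2 ∈ A} ⊆ {t ∈ T | t.1.1 ∈ A ∧ t.2 ∈ A}.image Prod.fst := by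
    intro q hq
    obtain ⟨hqS, hqA⟩ := Finset.mem_filter.1 hq
    obtain ⟨z, hzA, hz⟩ := hfar q hqS hqA
    exact Finset.mem_image.2 ⟨(q, z), Finset.mem_filter.2 ⟨hT q hqS z hz, hqA.1, hzA⟩, rfl⟩
  exact hlt.not_ge ((Finset.card_le_card hsub).trans Finset.card_image_le)

/-- Averaging over the random set `A`: the expected number of close pairs inside `A` beats `δ`
times that of the pairs met by `A` plus that of the pairs having a far point in `A`. -/
lemma exists_card_far_add_lt_card_pairs [Fintype X] [DecidableEq X] {w : Finset X → ℝ}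
    {δ η ρ : ℝ} (hw : ∀ A, 0 ≤ w A) (hunit : ∀ x, pairWeight w x x = 1) {S : Finset (X × X)}
    (hS : S.Nonempty) (hclose : ∀ q ∈ S, 4 * δ ≤ pairWeight w q.1 q.2) (hη0 : 0 ≤ η)
    (hfar : ∀ x y, ρ < dist x y → pairWeight w x y ≤ η) (hη : Fintype.card X * η < 2 * δ) :
    ∃ A : Finset X, (#{t ∈ {t ∈ S ×ˢ Finset.univ | ρ < dist t.1.1 t.2} | t.1.1 ∈ A ∧ t.2 ∈ A} : ℝ) +
      δ * (#{q ∈ S | q.1 ∈ A ∧ q.1 ∈ A} + #{q ∈ S | q.2 ∈ A ∧ q.2 ∈ A}) <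
      #{q ∈ S | q.1 ∈ A ∧ q.2 ∈ A} := by
  set T : Finset ((X × X) × X) := {t ∈ S ×ˢ Finset.univ | ρ < dist t.1.1 t.2}
  have hboth : 4 * δ * #S ≤ ∑ A, w A * (#{q ∈ S | q.1 ∈ A ∧ q.2 ∈ A} : ℝ) := by
    rw [sum_mul_card_filter_mem, mul_comm, ← nsmul_eq_mul]
    exact Finset.card_nsmul_le_sum _ _ _ hclose
  have hone : ∀ u : X × X → X, ∑ A, w A * (#{q ∈ S | u q ∈ A ∧ u q ∈ A} : ℝ) = #S := fun u => by
    simp only [sum_mul_card_filter_mem, hunit, Finset.sum_const, nsmul_eq_mul, mul_one]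
  have hcard : #T ≤ #S * Fintype.card X :=
    (Finset.card_filter_le _ _).trans_eq (by rw [Finset.card_product, Finset.card_univ])
  have hfarT : ∑ A, w A * (#{t ∈ T | t.1.1 ∈ A ∧ t.2 ∈ A} : ℝ) ≤ #S * Fintype.card X * η :=
    calc ∑ A, w A * (#{t ∈ T | t.1.1 ∈ A ∧ t.2 ∈ A} : ℝ)
        = ∑ t ∈ T, pairWeight w t.1.1 t.2 :=
          sum_mul_card_filter_mem w T (fun t => t.1.1) Prod.snd
      _ ≤ #T * η := by
          rw [← nsmul_eq_mul]
          exact Finset.sum_le_card_nsmul _ _ _ fun t ht => hfar _ _ (Finset.mem_filter.1 ht).2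
      _ ≤ #S * Fintype.card X * η := by
          gcongr
          exact_mod_cast hcard
  obtain ⟨A, -, hA⟩ : ∃ A ∈ Finset.univ,
      w A * (#{t ∈ T | t.1.1 ∈ A ∧ t.2 ∈ A} + δ *
        (#{q ∈ S | q.1 ∈ A ∧ q.1 ∈ A} + #{q ∈ S | q.2 ∈ A ∧ q.2 ∈ A})) <
      w A * (#{q ∈ S | q.1 ∈ A ∧ q.2 ∈ A} : ℝ) := by
    refine Finset.exists_lt_of_sum_lt ?_
    have hS' : (0 : ℝ) < #S := by exact_mod_cast hS.card_pos
    simp only [mul_add, mul_left_comm (w _) δ, Finset.sum_add_distrib, ← Finset.mul_sum, hone]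
    nlinarith [mul_lt_mul_of_pos_left hη hS']
  exact ⟨A, lt_of_mul_lt_mul_left hA (hw A)⟩

lemma exists_dense_cluster [Fintype X] [DecidableEq X] {w : Finset X → ℝ} {δ η ρ : ℝ}
    (hw : ∀ A, 0 ≤ w A) (hunit : ∀ x, pairWeight w x x = 1) {S : Finset (X × X)}
    (hS : S.Nonempty) (hclose : ∀ q ∈ S, 4 * δ ≤ pairWeight w q.1 q.2) (hη0 : 0 ≤ η)
    (hfar : ∀ x y, ρ < dist x y → pairWeight w x y ≤ η) (hη : Fintype.card X * η < 2 * δ) :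
    ∃ A : Finset X, (∀ x ∈ A, ∀ y ∈ A, dist x y ≤ 2 * ρ) ∧ (∃ q ∈ S, q.1 ∈ A ∧ q.2 ∈ A) ∧
      δ * #{q ∈ S | q.1 ∈ A ∨ q.2 ∈ A} ≤ #{q ∈ S | q.1 ∈ A ∧ q.2 ∈ A} := by
  have hδ : 0 ≤ δ := by nlinarith [mul_nonneg (Nat.cast_nonneg (α := ℝ) (Fintype.card X)) hη0]
  obtain ⟨A, hA⟩ := exists_card_far_add_lt_card_pairs hw hunit hS hclose hη0 hfar hη
  have heither : (#{q ∈ S | q.1 ∈ A ∨ q.2 ∈ A} : ℝ) ≤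
      #{q ∈ S | q.1 ∈ A ∧ q.1 ∈ A} + #{q ∈ S | q.2 ∈ A ∧ q.2 ∈ A} := by
    simp only [and_self]
    rw [Finset.filter_or]
    exact_mod_cast Finset.card_union_le _ _
  obtain ⟨q, hqS, hqA, hq⟩ := exists_pair_forall_dist_le_of_card_lt (S := S)
    (T := {t ∈ S ×ˢ Finset.univ | ρ < dist t.1.1 t.2})
    (fun q hqS z hz => Finset.mem_filter.2 ⟨Finset.mk_mem_product hqS (Finset.mem_univ z), hz⟩)
    (Nat.cast_lt.1 ((le_add_of_nonneg_right (by positivity)).trans_lt hA))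
  refine ⟨A, fun x hx y hy => ?_, ⟨q, hqS, hqA⟩, ?_⟩
  · linarith [dist_triangle_left x y q.1, hq x hx, hq y hy]
  · exact (mul_le_mul_of_nonneg_left heither hδ).trans
      ((le_add_of_nonneg_left (Nat.cast_nonneg _)).trans hA.le)

/-- Region growing: cut out a dense cluster and recurse on the pairs it does not meet. -/
lemma exists_isBoundedColoring_of_clusters [Countable X] [DecidableEq X] {R δ : ℝ} (hR : 0 ≤ R)
    (S : Finset (X × X))
    (hcluster : ∀ S' ⊆ S, S'.Nonempty → ∃ A : Finset X, (∀ x ∈ A, ∀ y ∈ A, dist x y ≤ R) ∧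
      (∃ q ∈ S', q.1 ∈ A ∧ q.2 ∈ A) ∧
      δ * #{q ∈ S' | q.1 ∈ A ∨ q.2 ∈ A} ≤ #{q ∈ S' | q.1 ∈ A ∧ q.2 ∈ A}) :
    ∃ h : X → ℕ, IsBoundedColoring R h ∧ δ * #S ≤ #{q ∈ S | h q.1 = h q.2} := by
  induction S using Finset.strongInduction with
  | H S ih =>
  rcases S.eq_empty_or_nonempty with rfl | hne
  · obtain ⟨h, hinj⟩ := Countable.exists_injective_nat X
    exact ⟨h, fun x y hxy => by rwa [hinj hxy, dist_self], by simp⟩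
  obtain ⟨A, hA, ⟨q, hqS, hqA⟩, hdense⟩ := hcluster S subset_rfl hne
  obtain ⟨h, hh, hcard⟩ := ih {q ∈ S | ¬(q.1 ∈ A ∨ q.2 ∈ A)}
    (Finset.filter_ssubset.2 ⟨q, hqS, not_not.2 (Or.inl hqA.1)⟩)
    fun S' hS' => hcluster S' (hS'.trans (Finset.filter_subset _ _))
  let h' : X → ℕ := fun x => if x ∈ A then 0 else h x + 1
  refine ⟨h', fun x y hxy => ?_, ?_⟩
  · by_cases hx : x ∈ A <;> by_cases hy : y ∈ A <;> simp only [h', hx, hy, if_true, if_false] at hxy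
    · exact hA x hx y hy
    · omega
    · omega
    · exact hh x y (by omega)
  have hdisj : Disjoint {q ∈ S | q.1 ∈ A ∧ q.2 ∈ A}
      {q ∈ S | ¬(q.1 ∈ A ∨ q.2 ∈ A) ∧ h q.1 = h q.2} :=
    Finset.disjoint_filter.2 fun q _ hq hq' => hq'.1 (Or.inl hq.1)
  have hsub : {q ∈ S | q.1 ∈ A ∧ q.2 ∈ A} ∪ {q ∈ S | ¬(q.1 ∈ A ∨ q.2 ∈ A) ∧ h q.1 = h q.2} ⊆
      {q ∈ S | h' q.1 = h' q.2} := by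
    rw [← Finset.filter_or]
    refine Finset.monotone_filter_right S fun q _ hq => ?_
    rcases hq with ⟨h₁, h₂⟩ | ⟨hnot, heq⟩
    · simp [h', h₁, h₂]
    · simp [h', not_or.1 hnot, heq]
  have hle := Finset.card_le_card hsub
  rw [Finset.card_union_of_disjoint hdisj] at hle
  rw [Finset.filter_filter] at hcard
  calc δ * #S = δ * #{q ∈ S | q.1 ∈ A ∨ q.2 ∈ A} + δ * #{q ∈ S | ¬(q.1 ∈ A ∨ q.2 ∈ A)} := by
        rw [← mul_add, ← Nat.cast_add, Finset.card_filter_add_card_filter_not]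
    _ ≤ #{q ∈ S | q.1 ∈ A ∧ q.2 ∈ A} + #{q ∈ S | ¬(q.1 ∈ A ∨ q.2 ∈ A) ∧ h q.1 = h q.2} :=
        add_le_add hdense hcard
    _ ≤ #{q ∈ S | h' q.1 = h' q.2} := by exact_mod_cast hle

lemma exists_card_uncovered_le_pow {α κ : Type*} {covers : κ → α → Prop}
    [∀ k, DecidablePred (covers k)] {δ : ℝ} (hδ : δ ≤ 1) {S : Finset α}
    (hcov : ∀ S' ⊆ S, ∃ k, δ * #S' ≤ #{a ∈ S' | covers k a}) (m : ℕ) :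
    ∃ k : Fin m → κ, (#{a ∈ S | ∀ j, ¬covers (k j) a} : ℝ) ≤ (1 - δ) ^ m * #S := by
  induction m with
  | zero => exact ⟨Fin.elim0, by simp⟩
  | succ m ih =>
    obtain ⟨k, hk⟩ := ih
    set U : Finset α := {a ∈ S | ∀ j, ¬covers (k j) a} with hU
    obtain ⟨k₀, hk₀⟩ := hcov U (Finset.filter_subset _ _)
    refine ⟨Fin.cons k₀ k, ?_⟩
    have hsplit : (#{a ∈ U | covers k₀ a} : ℝ) + #{a ∈ U | ¬covers k₀ a} = #U := by
      exact_mod_cast Finset.card_filter_add_card_filter_not _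
    calc (#{a ∈ S | ∀ j, ¬covers (Fin.cons (α := fun _ => κ) k₀ k j) a} : ℝ)
        = #{a ∈ U | ¬covers k₀ a} := by
          simp only [hU, Finset.filter_filter, Fin.forall_fin_succ, Fin.cons_zero, Fin.cons_succ,
            and_comm]
      _ ≤ (1 - δ) * #U := by linarith
      _ ≤ (1 - δ) ^ (m + 1) * #S := by
          rw [pow_succ', mul_assoc]
          exact mul_le_mul_of_nonneg_left hk (sub_nonneg.2 hδ)

lemma one_sub_pow_mul_sq_lt_one {n δ : ℝ} {m : ℕ} (hn : 0 < n) (hδ : δ ≤ 1)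
    (hm : 2 * Real.log n < δ * m) : (1 - δ) ^ m * n ^ 2 < 1 :=
  calc (1 - δ) ^ m * n ^ 2 ≤ Real.exp (-δ) ^ m * n ^ 2 :=
        mul_le_mul_of_nonneg_right
          (pow_le_pow_left₀ (sub_nonneg.2 hδ) (Real.one_sub_le_exp_neg δ) m) (sq_nonneg n)
    _ = Real.exp (2 * Real.log n - δ * m) := by
        rw [← Real.exp_nat_mul, sub_eq_neg_add, Real.exp_add, two_mul, Real.exp_add,
          Real.exp_log hn]
        ring_nf
    _ < 1 := Real.exp_lt_one_iff.2 (by linarith)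

lemma hasPartitionCover_of_pairWeight [Fintype X] [DecidableEq X] {w : Finset X → ℝ}
    {δ η ρ Δ : ℝ} {m : ℕ} (hw : ∀ A, 0 ≤ w A) (hunit : ∀ x, pairWeight w x x = 1)
    (hclose : ∀ x y, dist x y ≤ Δ → 4 * δ ≤ pairWeight w x y) (hη0 : 0 ≤ η) (hρ : 0 ≤ ρ)
    (hfar : ∀ x y, ρ < dist x y → pairWeight w x y ≤ η) (hη : Fintype.card X * η < 2 * δ)
    (hδ : δ ≤ 1) (hm : 2 * Real.log (Fintype.card X) < δ * m) :
    HasPartitionCover X m (2 * ρ) Δ := by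
  rcases isEmpty_or_nonempty X with hX | hX
  · exact ⟨fun _ _ => 0, fun _ x => hX.elim x, fun x => hX.elim x⟩
  let S : Finset (X × X) := {q | dist q.1 q.2 ≤ Δ}
  have hstep : ∀ S' ⊆ S, ∃ h : {h : X → ℕ // IsBoundedColoring (2 * ρ) h},
      δ * #S' ≤ #{q ∈ S' | h.1 q.1 = h.1 q.2} := by
    intro S' hS'
    obtain ⟨h, hh, hcard⟩ := exists_isBoundedColoring_of_clusters (by positivity) S'
      fun S'' hS'' hne => exists_dense_cluster hw hunit hne
        (fun q hq => hclose _ _ (Finset.mem_filter_univ q |>.1 (hS' (hS'' hq)))) hη0 hfar hη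
    exact ⟨⟨h, hh⟩, hcard⟩
  obtain ⟨h, hh⟩ := exists_card_uncovered_le_pow hδ hstep m
  refine ⟨fun j => (h j).1, fun j => (h j).2, ?_⟩
  have hlt : (#{q ∈ S | ∀ j, ¬(h j).1 q.1 = (h j).1 q.2} : ℝ) < 1 :=
    calc (#{q ∈ S | ∀ j, ¬(h j).1 q.1 = (h j).1 q.2} : ℝ) ≤ (1 - δ) ^ m * #S := hh
      _ ≤ (1 - δ) ^ m * (Fintype.card X) ^ 2 := by
          refine mul_le_mul_of_nonneg_left ?_ (pow_nonneg (sub_nonneg.2 hδ) m)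
          rw [sq, ← Nat.cast_mul, ← Fintype.card_prod]
          exact_mod_cast Finset.card_le_univ S
      _ < 1 := one_sub_pow_mul_sq_lt_one (by exact_mod_cast Fintype.card_pos) hδ hm
  intro x y hxy
  by_contra! hno
  refine hlt.not_ge (Nat.one_le_cast.2 (Finset.card_pos.2 ⟨(x, y), ?_⟩))
  simp [S, hxy, hno]

lemma hasPartitionCover_of_pairWeight_exp [Fintype X] [DecidableEq X] [Nonempty X]
    {w : Finset X → ℝ} {a ρ Δ : ℝ} {m : ℕ} (hw : ∀ B, 0 ≤ w B)
    (hunit : ∀ x, pairWeight w x x = 1) (ha0 : 0 ≤ a) (ha : a ≤ Real.log (Fintype.card X) + 1)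
    (hclose : ∀ x y, dist x y ≤ Δ → Real.exp (-a) ≤ 2 * pairWeight w x y) (hρ : 0 ≤ ρ)
    (hfar : ∀ x y, ρ < dist x y →
      pairWeight w x y ≤ Real.exp (-(2 * Real.log (Fintype.card X) + 4)))
    (hm : 16 * Real.log (Fintype.card X) * Real.exp a < m) :
    HasPartitionCover X m (2 * ρ) Δ := by
  set L := Real.log (Fintype.card X) with hL
  have hcard : (Fintype.card X : ℝ) = Real.exp L :=
    (Real.exp_log (Nat.cast_pos.2 Fintype.card_pos)).symm
  refine hasPartitionCover_of_pairWeight (δ := Real.exp (-a) / 8) hw hunit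
    (fun x y hxy => by linarith [hclose x y hxy]) (Real.exp_pos _).le hρ hfar ?_ ?_ ?_
  · have hsplit : Real.exp L * Real.exp (-(2 * L + 4)) * Real.exp (L + 4 - a) = Real.exp (-a) := by
      rw [← Real.exp_add, ← Real.exp_add]
      ring_nf
    have hfour : 4 < Real.exp (L + 4 - a) := by
      linarith [Real.add_one_lt_exp (x := L + 4 - a) (by linarith)]
    rw [hcard, ← hsplit]
    nlinarith [mul_pos (Real.exp_pos L) (Real.exp_pos (-(2 * L + 4)))]
  · linarith [Real.exp_le_one_iff.2 (neg_nonpos.2 ha0)]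
  · rw [← hL]
    have hinv : Real.exp (-a) * Real.exp a = 1 := by
      rw [← Real.exp_add, neg_add_cancel, Real.exp_zero]
    nlinarith [mul_lt_mul_of_pos_left hm (Real.exp_pos (-a))]

lemma natFloor_mul_exp_add_one_le {n σ : ℝ} (hn : 2 ≤ n) (hσ : 0 < σ) :
    ((⌊16 * Real.log n * Real.exp (Real.log n / (2 * σ) + 1)⌋₊ + 1 : ℕ) : ℝ) ≤
      50 * Real.log n * n ^ (1 / (2 * σ)) := by
  have hlog : 1 / 2 ≤ Real.log n :=
    le_trans (by linarith [Real.log_two_gt_d9]) (Real.log_le_log two_pos hn)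
  have hexp : Real.exp (Real.log n / (2 * σ) + 1) = Real.exp 1 * n ^ (1 / (2 * σ)) := by
    rw [Real.rpow_def_of_pos (by linarith), ← Real.exp_add, mul_one_div, add_comm]
  have hroot : 1 ≤ n ^ (1 / (2 * σ)) := Real.one_le_rpow (by linarith) (by positivity)
  have hfloor := Nat.floor_le (show 0 ≤ 16 * Real.log n * Real.exp (Real.log n / (2 * σ) + 1) by
    positivity)
  rw [hexp] at hfloor ⊢
  push_cast
  nlinarith [mul_le_mul_of_nonneg_right hlog (zero_le_one.trans hroot),
    mul_le_mul_of_nonneg_left Real.exp_one_lt_d9.le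
      (show 0 ≤ Real.log n * n ^ (1 / (2 * σ)) by positivity)]

end PartitionCover

/-- Choose the kernel scale so that pairs at distance `τ * Δ` have weight below `card X ^ (-2)`;
since `64 * A * σ ≤ τ ^ p`, close pairs keep weight about `card X ^ (-1 / (2 * σ))`. -/
lemma HasEuclideanSnowflake.exists_hasPartitionCover {X : Type*} [MetricSpace X] [Fintype X]
    {p A σ τ : ℝ} (h : HasEuclideanSnowflake X p A) (hX : 2 ≤ Fintype.card X)
    (hp : 0 ≤ p) (hσ : 1 ≤ σ) (hτ : 0 < τ) (hτσ : 64 * A * σ ≤ τ ^ p) :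
    ∃ m : ℕ, m ≤ 50 * Real.log (Fintype.card X) * (Fintype.card X : ℝ) ^ (1 / (2 * σ)) ∧
      ∀ Δ : ℝ, 0 < Δ → HasPartitionCover X m (2 * (τ * Δ)) Δ := by
  classical
  have : Nonempty X := Fintype.card_pos_iff.1 (by omega)
  have hn : (2 : ℝ) ≤ Fintype.card X := by exact_mod_cast hX
  set L := Real.log (Fintype.card X) with hL
  have hL0 : 0 ≤ L := Real.log_nonneg (by linarith)
  set a := L / (2 * σ) + 1 with ha
  have hσL : L / (2 * σ) ≤ L := div_le_self hL0 (by linarith)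
  refine ⟨⌊16 * L * Real.exp a⌋₊ + 1, ?_, fun Δ hΔ => ?_⟩
  · exact natFloor_mul_exp_add_one_le hn (by linarith)
  set μ := (2 * L + 4) / (τ * Δ) ^ p
  have hμ0 : 0 ≤ μ := by positivity
  have hpow : 0 < (τ * Δ) ^ p := by positivity
  have hμτ : μ * (τ * Δ) ^ p = 2 * L + 4 := div_mul_cancel₀ _ hpow.ne'
  obtain ⟨w, hw, hunit, hpair⟩ := h.exists_pairWeight hμ0
  refine hasPartitionCover_of_pairWeight_exp (a := a) hw hunit (by positivity) (by linarith)
    (fun x y hxy => (Real.exp_le_exp.2 (neg_le_neg ?_)).trans (hpair x y).1) (by positivity)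
    (fun x y hxy => (hpair x y).2.trans (Real.exp_le_exp.2 (neg_le_neg ?_)))
    (by exact_mod_cast Nat.lt_floor_add_one _)
  · have hdist : dist x y ^ p ≤ Δ ^ p := Real.rpow_le_rpow dist_nonneg hxy hp
    rw [ha, ← sub_le_iff_le_add, le_div_iff₀ (by positivity)]
    have hchain : 64 * A * σ * (μ * dist x y ^ p) ≤ 2 * L + 4 :=
      calc 64 * A * σ * (μ * dist x y ^ p) ≤ τ ^ p * (μ * Δ ^ p) := by gcongr
        _ = 2 * L + 4 := by rw [← hμτ, Real.mul_rpow hτ.le hΔ.le, mul_left_comm]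
    linarith
  · rw [← hL, ← hμτ]
    gcongr

section WalkWeight

variable {X : Type*} [MetricSpace X] {G : SimpleGraph X} {u v w : X}

lemma symDist_mk (a b : X) : symDist s(a, b) = dist a b := rfl

lemma symDist_nonneg (e : Sym2 X) : 0 ≤ symDist e := by
  induction e with | _ a b => exact dist_nonneg

lemma walkWeight_nil : walkWeight (SimpleGraph.Walk.nil : G.Walk u u) = 0 := by
  simp [walkWeight]

lemma walkWeight_cons (h : G.Adj u v) (p : G.Walk v w) :
    walkWeight (SimpleGraph.Walk.cons h p) = dist u v + walkWeight p := by
  simp [walkWeight, symDist_mk]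

lemma walkWeight_toWalk (h : G.Adj u v) : walkWeight h.toWalk = dist u v := by
  simp [SimpleGraph.Adj.toWalk, walkWeight_cons, walkWeight_nil]

lemma walkWeight_append (p : G.Walk u v) (q : G.Walk v w) :
    walkWeight (p.append q) = walkWeight p + walkWeight q := by
  simp [walkWeight]

lemma walkWeight_reverse (p : G.Walk u v) : walkWeight p.reverse = walkWeight p := by
  simp [walkWeight, List.sum_reverse]

lemma dist_le_walkWeight (p : G.Walk u v) : dist u v ≤ walkWeight p := by
  induction p with
  | nil => rw [dist_self, walkWeight_nil]
  | cons h p ih =>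
    rw [walkWeight_cons]
    exact (dist_triangle _ _ _).trans (add_le_add_right ih _)

lemma isSpanner_of_forall_exists_walk {t : ℝ}
    (h : ∀ x y : X, ∃ p : G.Walk x y, walkWeight p ≤ t * dist x y) : IsSpanner G t := by
  intro x y
  obtain ⟨p, hp⟩ := h x y
  have hlower : dist x y ∈ lowerBounds {c | ∃ p : G.Walk x y, walkWeight p = c} := by
    rintro _ ⟨q, rfl⟩
    exact dist_le_walkWeight q
  exact ⟨le_csInf ⟨_, p, rfl⟩ hlower, (csInf_le ⟨_, hlower⟩ ⟨p, rfl⟩).trans hp⟩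

lemma IsSpanner.mono {s t : ℝ} (h : IsSpanner G s) (hst : s ≤ t) : IsSpanner G t := fun x y =>
  ⟨(h x y).1, (h x y).2.trans (mul_le_mul_of_nonneg_right hst dist_nonneg)⟩

lemma graphWeight_fromEdgeSet_image_le [Fintype X] [DecidableEq X] {κ : Type*} (S : Finset κ)
    (f : κ → Sym2 X) :
    graphWeight (SimpleGraph.fromEdgeSet (S.image f : Set (Sym2 X))) ≤ ∑ k ∈ S, symDist (f k) := by
  refine le_trans ?_ (Finset.sum_image_le_of_nonneg fun e _ => symDist_nonneg e)
  refine Finset.sum_le_sum_of_subset_of_nonneg (fun e he => ?_) fun e _ _ => symDist_nonneg e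
  rw [Set.Finite.mem_toFinset, SimpleGraph.edgeSet_fromEdgeSet] at he
  exact he.1

lemma edgeCount_fromEdgeSet_image_le {V κ : Type*} [DecidableEq V] (S : Finset κ)
    (f : κ → Sym2 V) :
    edgeCount (SimpleGraph.fromEdgeSet (S.image f : Set (Sym2 V))) ≤ #S := by
  rw [edgeCount, Nat.card_coe_set_eq, SimpleGraph.edgeSet_fromEdgeSet]
  refine (Set.ncard_le_ncard Set.sdiff_subset (Finset.finite_toSet _)).trans ?_
  rw [Set.ncard_coe_finset]
  exact Finset.card_image_le

end WalkWeight

section MinimumSpanningTree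

/-- The variation of `φ` along an unordered pair. -/
def pairVariation {V : Type*} (φ : V → ℝ) : Sym2 V → ℝ :=
  Sym2.lift ⟨fun a b => |φ a - φ b|, fun _ _ => abs_sub_comm _ _⟩

lemma pairVariation_nonneg {V : Type*} (φ : V → ℝ) (e : Sym2 V) : 0 ≤ pairVariation φ e := by
  induction e with | _ a b => exact abs_nonneg _

lemma abs_sub_le_sum_edges_pairVariation {V : Type*} (φ : V → ℝ) {G : SimpleGraph V} {u v : V}
    (p : G.Walk u v) : |φ u - φ v| ≤ (p.edges.map (pairVariation φ)).sum := by
  induction p with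
  | nil => simp
  | @cons a b c _ p ih =>
    rw [SimpleGraph.Walk.edges_cons, List.map_cons, List.sum_cons]
    exact (abs_sub_le _ (φ b) _).trans (add_le_add_right ih _)

lemma abs_sub_le_sum_edgeSet_pairVariation {V : Type*} [Finite V] (φ : V → ℝ)
    {G : SimpleGraph V} {u v : V} (h : G.Reachable u v) :
    |φ u - φ v| ≤ ∑ e ∈ G.edgeSet.toFinite.toFinset, pairVariation φ e := by
  classical
  obtain ⟨p, hp⟩ := h.exists_isPath
  refine (abs_sub_le_sum_edges_pairVariation φ p).trans ?_
  rw [← List.sum_toFinset _ hp.isTrail.edges_nodup]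
  refine Finset.sum_le_sum_of_subset_of_nonneg (fun e he => ?_)
    fun e _ _ => pairVariation_nonneg φ e
  exact (Set.Finite.mem_toFinset _).2 (p.edges_subset_edgeSet (List.mem_toFinset.1 he))

variable {X : Type*} [MetricSpace X]

/-- The tent function of height `r / 2` and radius `r / 2` centered at `v`. -/
noncomputable def tent (r : ℝ) (v x : X) : ℝ := max 0 (r / 2 - dist v x)

lemma tent_nonneg (r : ℝ) (v x : X) : 0 ≤ tent r v x := le_max_left _ _

lemma tent_eq_zero {r : ℝ} {v x : X} (h : r / 2 ≤ dist v x) : tent r v x = 0 :=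
  max_eq_left (sub_nonpos.2 h)

lemma abs_tent_sub_tent_le (r : ℝ) (v x y : X) : |tent r v x - tent r v y| ≤ dist x y :=
  calc |tent r v x - tent r v y| ≤ |r / 2 - dist v x - (r / 2 - dist v y)| := by
        rw [tent, tent, max_comm 0, max_comm 0]
        exact abs_max_sub_max_le_abs _ _ _
    _ = |dist y v - dist x v| := by rw [sub_sub_sub_cancel_left, dist_comm v, dist_comm v]
    _ ≤ dist x y := by
        rw [dist_comm x y]
        exact abs_dist_sub_le y x v

lemma tent_add_tent_le {r : ℝ} {v v' x y : X} (h : r ≤ dist v v') (hx : tent r v y = 0)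
    (hy : tent r v' x = 0) : tent r v x + tent r v' y ≤ dist x y := by
  have h₁ := (le_abs_self _).trans (abs_tent_sub_tent_le r v x y)
  have h₂ := (neg_le_abs _).trans (abs_tent_sub_tent_le r v' x y)
  rcases le_total (r / 2 - dist v x) 0 with hvx | hvx
  · rw [show tent r v x = 0 from max_eq_left hvx]
    linarith
  rcases le_total (r / 2 - dist v' y) 0 with hvy | hvy
  · rw [show tent r v' y = 0 from max_eq_left hvy]
    linarith
  · rw [tent, tent, max_eq_right hvx, max_eq_right hvy]
    linarith [dist_triangle4 v x y v', dist_comm y v']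

lemma exists_forall_tent_eq_zero_of_ne {N : Finset X} {r : ℝ} (hne : N.Nonempty)
    (hsep : (N : Set X).Pairwise fun x y => r ≤ dist x y) (x : X) :
    ∃ c ∈ N, ∀ v ∈ N, v ≠ c → tent r v x = 0 := by
  obtain ⟨c, hc, hmin⟩ := Finset.exists_min_image N (fun v => dist v x) hne
  exact ⟨c, hc, fun v hv hvc => tent_eq_zero (by
    linarith [hsep hv hc hvc, dist_triangle_right v c x, hmin v hv])⟩

/-- The tents of a separated set have disjoint supports, so at most two terms are nonzero. -/
lemma sum_abs_tent_sub_tent_le {N : Finset X} {r : ℝ}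
    (hsep : (N : Set X).Pairwise fun x y => r ≤ dist x y) (x y : X) :
    ∑ v ∈ N, |tent r v x - tent r v y| ≤ dist x y := by
  rcases N.eq_empty_or_nonempty with rfl | hne
  · exact dist_nonneg
  obtain ⟨c, hc, hcx⟩ := exists_forall_tent_eq_zero_of_ne hne hsep x
  obtain ⟨d, hd, hdy⟩ := exists_forall_tent_eq_zero_of_ne hne hsep y
  rcases eq_or_ne c d with rfl | hcd
  · rw [Finset.sum_eq_single_of_mem c hc fun v hv hvc => by
      rw [hcx v hv hvc, hdy v hv hvc, sub_zero, abs_zero]]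
    exact abs_tent_sub_tent_le r c x y
  · rw [Finset.sum_eq_add_of_mem c d hc hd hcd fun v hv hvcd => by
      rw [hcx v hv hvcd.1, hdy v hv hvcd.2, sub_zero, abs_zero]]
    rw [hdy c hc hcd, hcx d hd hcd.symm, sub_zero, zero_sub, abs_neg,
      abs_of_nonneg (tent_nonneg _ _ _), abs_of_nonneg (tent_nonneg _ _ _)]
    exact tent_add_tent_le (hsep hc hd hcd) (hdy c hc hcd) (hcx d hd hcd.symm)

/-- In a connected graph each tent varies by `r / 2`, while by disjointness of the supports an edge
contributes at most its length to the total variation. -/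
lemma card_mul_le_mstWeight [Fintype X] {N : Finset X} {r : ℝ} (hN : N.Nontrivial)
    (hsep : (N : Set X).Pairwise fun x y => r ≤ dist x y) : #N * (r / 2) ≤ mstWeight X := by
  obtain ⟨x₀, -⟩ := hN.nonempty
  have : Nonempty X := ⟨x₀⟩
  refine le_csInf ⟨_, ⊤, SimpleGraph.connected_top, rfl⟩ ?_
  rintro _ ⟨G, hG, rfl⟩
  have htent : ∀ v ∈ N, r / 2 ≤
      ∑ e ∈ G.edgeSet.toFinite.toFinset, pairVariation (tent r v) e := by
    intro v hv
    obtain ⟨w, hw, hwv⟩ := hN.exists_ne v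
    refine le_trans ?_ (abs_sub_le_sum_edgeSet_pairVariation _ (hG.preconnected v w))
    have hvw := hsep hv hw hwv.symm
    rw [tent_eq_zero (x := w) (by linarith [dist_nonneg (x := v) (y := w)]), sub_zero]
    refine le_trans ?_ (le_abs_self _)
    rw [tent, dist_self, sub_zero]
    exact le_max_right _ _
  calc #N * (r / 2) ≤
        ∑ v ∈ N, ∑ e ∈ G.edgeSet.toFinite.toFinset, pairVariation (tent r v) e := by
        rw [← nsmul_eq_mul]
        exact Finset.card_nsmul_le_sum _ _ _ htent
    _ = ∑ e ∈ G.edgeSet.toFinite.toFinset, ∑ v ∈ N, pairVariation (tent r v) e :=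
        Finset.sum_comm
    _ ≤ graphWeight G := by
        refine Finset.sum_le_sum fun e _ => ?_
        induction e with | _ a b => exact sum_abs_tent_sub_tent_le hsep a b

lemma mstWeight_nonneg [Fintype X] : 0 ≤ mstWeight X := by
  refine Real.sInf_nonneg ?_
  rintro _ ⟨G, -, rfl⟩
  exact Finset.sum_nonneg fun e _ => symDist_nonneg e

lemma dist_le_mstWeight [Fintype X] (x y : X) : dist x y ≤ mstWeight X := by
  classical
  rcases eq_or_ne x y with rfl | hxy
  · exact (dist_self x).trans_le mstWeight_nonneg
  have hsep : (({x, y} : Finset X) : Set X).Pairwise fun a b => dist x y ≤ dist a b := by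
    rw [Finset.coe_pair]
    exact Set.pairwise_pair.2 fun _ => ⟨le_rfl, (dist_comm x y).le⟩
  have h := card_mul_le_mstWeight (N := {x, y}) ⟨x, by simp, y, by simp, hxy⟩ hsep
  rw [Finset.card_pair hxy] at h
  push_cast at h
  linarith

lemma mstWeight_pos [Fintype X] [Nontrivial X] : 0 < mstWeight X := by
  obtain ⟨x, y, hxy⟩ := exists_pair_ne X
  exact (dist_pos.2 hxy).trans_le (dist_le_mstWeight x y)

end MinimumSpanningTree

section StarSystem

/-- Nested nets of `X`, one for every scale `r i`. -/
structure NetHierarchy (X : Type*) [MetricSpace X] (r : ℕ → ℝ) where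
  net : ℕ → Finset X
  monotone_net : Monotone net
  separated (i : ℕ) : (net i : Set X).Pairwise fun x y => r i ≤ dist x y
  exists_dist_lt (i : ℕ) (x : X) : ∃ z ∈ net i, dist x z < r i

lemma exists_net_superset {X : Type*} [MetricSpace X] [Finite X] {r : ℝ} (hr : 0 < r)
    {A : Finset X} (hA : (A : Set X).Pairwise fun x y => r ≤ dist x y) :
    ∃ B, A ⊆ B ∧ ((B : Set X).Pairwise fun x y => r ≤ dist x y) ∧
      ∀ x, ∃ z ∈ B, dist x z < r := by
  classical
  obtain ⟨B, hAB, hB⟩ := Finite.exists_le_maximal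
    (p := fun B : Finset X => (B : Set X).Pairwise fun x y => r ≤ dist x y) hA
  refine ⟨B, hAB, hB.prop, fun x => ?_⟩
  by_contra! hfar
  have hinsert : ((insert x B : Finset X) : Set X).Pairwise fun x y => r ≤ dist x y := by
    rw [Finset.coe_insert]
    exact hB.prop.insert fun y hy _ => ⟨hfar y hy, (hfar y hy).trans_eq (dist_comm x y)⟩
  have hx : x ∈ B := hB.le_of_ge hinsert (Finset.subset_insert x B) (Finset.mem_insert_self x B)
  exact hr.not_ge ((hfar x hx).trans_eq (dist_self x))

lemma nonempty_netHierarchy {X : Type*} [MetricSpace X] [Finite X] {r : ℕ → ℝ}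
    (hr : ∀ i, 0 < r i) (hanti : Antitone r) : Nonempty (NetHierarchy X r) := by
  have hstep : ∀ i (A : Finset X), ((A : Set X).Pairwise fun x y => r i ≤ dist x y) →
      ∃ B, A ⊆ B ∧ ((B : Set X).Pairwise fun x y => r i ≤ dist x y) ∧
        ∀ x, ∃ z ∈ B, dist x z < r i := fun i A => exists_net_superset (hr i)
  choose! next hsub hsep hcover using hstep
  obtain ⟨N, hN0, hNsucc⟩ : ∃ N : ℕ → Finset X, N 0 = next 0 ∅ ∧
      ∀ i, N (i + 1) = next (i + 1) (N i) :=
    ⟨fun i => Nat.rec (next 0 ∅) (fun i A => next (i + 1) A) i, rfl, fun _ => rfl⟩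
  have hN : ∀ i, (N i : Set X).Pairwise fun x y => r i ≤ dist x y := fun i => by
    induction i with
    | zero => exact hN0 ▸ hsep 0 ∅ (by simp)
    | succ i ih =>
      exact hNsucc i ▸ hsep (i + 1) (N i) (ih.mono' fun _ _ => (hanti i.le_succ).trans)
  have hN' : ∀ i : ℕ, (N i : Set X).Pairwise fun x y => r (i + 1) ≤ dist x y :=
    fun i => (hN i).mono' fun _ _ => (hanti i.le_succ).trans
  exact ⟨{
    net := N
    monotone_net := monotone_nat_of_le_succ fun i => hNsucc i ▸ hsub (i + 1) (N i) (hN' i)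
    separated := hN
    exists_dist_lt := fun i => match i with
      | 0 => hN0 ▸ hcover 0 ∅ (by simp)
      | i + 1 => hNsucc i ▸ hcover (i + 1) (N i) (hN' i) }⟩

namespace NetHierarchy

variable {X : Type*} [MetricSpace X] {r : ℕ → ℝ} {x : X} {i : ℕ}

/-- The first scale at which `x` enters the nets, and `0` if it never does. -/
noncomputable def birth (𝒩 : NetHierarchy X r) (x : X) : ℕ := sInf {i | x ∈ 𝒩.net i}

lemma birth_le (𝒩 : NetHierarchy X r) (hx : x ∈ 𝒩.net i) : 𝒩.birth x ≤ i := Nat.sInf_le hx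

lemma mem_net_of_birth_le (𝒩 : NetHierarchy X r) {k : ℕ} (hx : x ∈ 𝒩.net i)
    (hk : 𝒩.birth x ≤ k) : x ∈ 𝒩.net k :=
  𝒩.monotone_net hk (Nat.sInf_mem (s := {i | x ∈ 𝒩.net i}) ⟨i, hx⟩)

end NetHierarchy

lemma exists_minimal_class_representative {α β γ : Type*} [LinearOrder γ] (N : Finset α)
    (h : α → β) (ord : α → γ) :
    ∃ c : α → α, ∀ x ∈ N, c x ∈ N ∧ h (c x) = h x ∧ ord (c x) ≤ ord x ∧
      ∀ y, h x = h y → c x = c y := by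
  classical
  rcases isEmpty_or_nonempty α with hα | hα
  · exact ⟨id, fun x => hα.elim x⟩
  have hmin : ∀ b ∈ N.image h, ∃ z ∈ {y ∈ N | h y = b}, ∀ y ∈ {y ∈ N | h y = b}, ord z ≤ ord y :=
    fun b hb => Finset.exists_min_image _ ord (Finset.fiber_nonempty_iff_mem_image.2 hb)
  choose! rep hrep hle using hmin
  refine ⟨fun x => rep (h x), fun x hx => ?_⟩
  have hb := Finset.mem_image_of_mem h hx
  obtain ⟨hmem, heq⟩ := Finset.mem_filter.1 (hrep _ hb)
  exact ⟨hmem, heq, hle _ hb x (Finset.mem_filter.2 ⟨hx, rfl⟩), fun y hy => congrArg rep hy⟩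

/-- A net hierarchy at the scales `D / 2 ^ i / 8` together with `m` assignments of net points to
centers at every scale: assigned centers are at distance `O(T * D / 2 ^ i)`, and two net points at
distance at most `2 * (D / 2 ^ i)` share a center in one of the assignments. Centers are born
no later than the points assigned to them. -/
structure StarSystem (X : Type*) [MetricSpace X] (D T : ℝ) (m : ℕ) extends
    NetHierarchy X fun i => D / 2 ^ i / 8 where
  center : ℕ → Fin m → X → X
  center_mem {i : ℕ} (j : Fin m) {x : X} (hx : x ∈ net i) : center i j x ∈ net i
  birth_center_le {i : ℕ} (j : Fin m) {x : X} (hx : x ∈ net i) :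
    toNetHierarchy.birth (center i j x) ≤ toNetHierarchy.birth x
  dist_center_le {i : ℕ} (j : Fin m) {x : X} (hx : x ∈ net i) :
    dist x (center i j x) ≤ 2 * T * (D / 2 ^ i)
  exists_center_eq {i : ℕ} {x y : X} (hx : x ∈ net i) (hy : y ∈ net i)
    (hxy : dist x y ≤ 2 * (D / 2 ^ i)) : ∃ j, center i j x = center i j y

lemma nonempty_starSystem {X : Type*} [MetricSpace X] [Finite X] {D T : ℝ} {m : ℕ} (hD : 0 < D)
    (hcover : ∀ Δ, 0 < Δ → HasPartitionCover X m (T * Δ) Δ) : Nonempty (StarSystem X D T m) := by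
  obtain ⟨𝒩⟩ := nonempty_netHierarchy (X := X) (r := fun i => D / 2 ^ i / 8)
    (fun i => by positivity) fun i k hik => by
      have := pow_le_pow_right₀ (one_le_two (α := ℝ)) hik
      dsimp only
      gcongr
  choose h hdiam hclose using fun i : ℕ => hcover (2 * (D / 2 ^ i)) (by positivity)
  choose c hc using fun i j => exists_minimal_class_representative (𝒩.net i) (h i j) 𝒩.birth
  exact ⟨{ 𝒩 with
    center := c
    center_mem := fun j x hx => (hc _ j x hx).1
    birth_center_le := fun j x hx => (hc _ j x hx).2.2.1
    dist_center_le := fun {i} j x hx =>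
      (hdiam i j x _ (hc i j x hx).2.1.symm).trans_eq (by ring)
    exists_center_eq := fun {i} x y hx _ hxy =>
      (hclose i x y hxy).imp fun j hj => (hc i j x hx).2.2.2 y hj }⟩

lemma sum_range_add_le_mul_add_two {B : ℕ → ℝ} {W n : ℝ} {a : ℕ} (hW : 0 ≤ W) (hn : n ≤ 2 ^ a)
    (hlevel : ∀ i, B i ≤ W) (hpoints : ∀ i, B i ≤ n * (W / 2 ^ i)) (J : ℕ) :
    ∑ i ∈ Finset.range (a + J), B i ≤ W * (a + 2) := by
  have hcoarse : ∑ i ∈ Finset.range a, B i ≤ a * W := by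
    simpa using Finset.sum_le_card_nsmul (Finset.range a) B W fun i _ => hlevel i
  have hfine : ∑ k ∈ Finset.range J, B (a + k) ≤ W * 2 :=
    calc ∑ k ∈ Finset.range J, B (a + k) ≤ ∑ k ∈ Finset.range J, W * (1 / 2) ^ k := by
          refine Finset.sum_le_sum fun k _ => (hpoints (a + k)).trans ?_
          calc n * (W / 2 ^ (a + k)) ≤ 2 ^ a * (W / 2 ^ (a + k)) := by gcongr
            _ = W * (1 / 2) ^ k := by
                rw [pow_add, one_div_pow]
                field_simp
      _ ≤ W * 2 := by
          rw [← Finset.mul_sum]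
          exact mul_le_mul_of_nonneg_left (sum_geometric_two_le J) hW
  rw [Finset.sum_range_add]
  linarith

namespace StarSystem

variable {X : Type*} [MetricSpace X] {D T : ℝ} {m : ℕ} (𝒮 : StarSystem X D T m)

open Classical in
/-- The nontrivial assignments of `𝒮` at scales below `I`, as triples (scale, assignment, point). -/
noncomputable def spokes [Fintype X] (I : ℕ) : Finset (ℕ × Fin m × X) :=
  {q ∈ Finset.range I ×ˢ Finset.univ |
    q.2.2 ∈ 𝒮.net q.1 ∧ 𝒮.center q.1 q.2.1 q.2.2 ≠ q.2.2}

lemma mem_spokes [Fintype X] {I i : ℕ} {j : Fin m} {x : X} :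
    (i, j, x) ∈ 𝒮.spokes I ↔ i < I ∧ x ∈ 𝒮.net i ∧ 𝒮.center i j x ≠ x := by
  simp [spokes]

/-- The edge joining a point to its center. -/
def spokeEdge (q : ℕ × Fin m × X) : Sym2 X := s(q.2.2, 𝒮.center q.1 q.2.1 q.2.2)

open Classical in
/-- The union of all stars of `𝒮` at scales below `I`. -/
noncomputable def graph [Fintype X] (I : ℕ) : SimpleGraph X :=
  SimpleGraph.fromEdgeSet ((𝒮.spokes I).image 𝒮.spokeEdge : Set (Sym2 X))

/-- Both a point and its center would lie in the net of scale `birth x`, which for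
`birth x + l ≤ i` is too sparse to contain two points assigned to each other at scale `i`. -/
lemma lt_birth_add {i l : ℕ} {j : Fin m} {x : X} (hD : 0 < D) (hl : 16 * T < 2 ^ l)
    (hx : x ∈ 𝒮.net i) (hne : 𝒮.center i j x ≠ x) : i < 𝒮.birth x + l := by
  by_contra! hle
  have hsep := 𝒮.separated (𝒮.birth x) (𝒮.mem_net_of_birth_le hx le_rfl)
    (𝒮.mem_net_of_birth_le (𝒮.center_mem j hx) (𝒮.birth_center_le j hx)) hne.symm
  have hscale : D / 2 ^ i * 2 ^ l ≤ D / 2 ^ 𝒮.birth x := by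
    rw [div_mul_eq_mul_div, div_le_div_iff₀ (by positivity) (by positivity), mul_assoc, ← pow_add,
      add_comm l]
    exact mul_le_mul_of_nonneg_left (pow_le_pow_right₀ one_le_two hle) hD.le
  have hlt := mul_lt_mul_of_pos_left hl (show 0 < D / 2 ^ i by positivity)
  linarith [𝒮.dist_center_le j hx]

lemma card_spokes_le [Fintype X] {l : ℕ} (hD : 0 < D) (hl : 16 * T < 2 ^ l) (I : ℕ) :
    #(𝒮.spokes I) ≤ m * (l * Fintype.card X) := by
  let age : ℕ × Fin m × X → Fin m × ℕ × X := fun q => (q.2.1, q.1 - 𝒮.birth q.2.2, q.2.2)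
  have hcard : #((Finset.univ : Finset (Fin m)) ×ˢ Finset.range l ×ˢ (Finset.univ : Finset X)) =
      m * (l * Fintype.card X) := by
    simp
  rw [← hcard]
  refine Finset.card_le_card_of_injOn age ?_ ?_
  · rintro ⟨i, j, x⟩ hq
    obtain ⟨-, hx, hne⟩ := 𝒮.mem_spokes.1 hq
    have := 𝒮.lt_birth_add hD hl hx hne
    simp only [age, Finset.coe_product, Set.mem_prod, Finset.mem_coe, Finset.mem_univ,
      Finset.mem_range, true_and, and_true]
    have := 𝒮.birth_le hx
    omega
  · rintro ⟨i, j, x⟩ hq ⟨i', j', x'⟩ hq' heq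
    simp only [age, Prod.mk.injEq] at heq
    obtain ⟨rfl, hi, rfl⟩ := heq
    have := 𝒮.birth_le (𝒮.mem_spokes.1 hq).2.1
    have := 𝒮.birth_le (𝒮.mem_spokes.1 hq').2.1
    rw [show i = i' by omega]

lemma edgeCount_graph_le [Fintype X] {l : ℕ} (hD : 0 < D) (hl : 16 * T < 2 ^ l) (I : ℕ) :
    edgeCount (𝒮.graph I) ≤ m * (l * Fintype.card X) := by
  classical
  exact (edgeCount_fromEdgeSet_image_le _ _).trans (𝒮.card_spokes_le hD hl I)

lemma graphWeight_graph_le_sum [Fintype X] (I : ℕ) :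
    graphWeight (𝒮.graph I) ≤
      ∑ j, ∑ i ∈ Finset.range I, ∑ x ∈ 𝒮.net i, dist x (𝒮.center i j x) := by
  classical
  refine (graphWeight_fromEdgeSet_image_le _ _).trans ?_
  rw [spokes, Finset.sum_filter, Finset.sum_product, Finset.sum_comm (s := Finset.univ)]
  refine Finset.sum_le_sum fun i _ => ?_
  rw [← Finset.univ_product_univ, Finset.sum_product]
  refine Finset.sum_le_sum fun j _ => ?_
  rw [← Finset.sum_filter]
  refine Finset.sum_le_sum_of_subset_of_nonneg (fun x hx => ?_) fun _ _ _ => dist_nonneg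
  exact (Finset.mem_filter.1 hx).2.1

lemma sum_dist_center_le_card_mul (i : ℕ) (j : Fin m) :
    ∑ x ∈ 𝒮.net i, dist x (𝒮.center i j x) ≤ #(𝒮.net i) * (2 * T * (D / 2 ^ i)) := by
  rw [← nsmul_eq_mul]
  exact Finset.sum_le_card_nsmul _ _ _ fun x hx => 𝒮.dist_center_le j hx

lemma sum_dist_center_le_mstWeight [Fintype X] (hT : 0 ≤ T) (i : ℕ) (j : Fin m) :
    ∑ x ∈ 𝒮.net i, dist x (𝒮.center i j x) ≤ 32 * T * mstWeight X := by
  by_cases h : (𝒮.net i).Nontrivial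
  swap
  · have hcenter : ∀ x ∈ 𝒮.net i, dist x (𝒮.center i j x) = 0 := fun x hx =>
      dist_eq_zero.2 (Set.not_nontrivial_iff.1 h hx (𝒮.center_mem j hx))
    rw [Finset.sum_eq_zero hcenter]
    exact mul_nonneg (by positivity) mstWeight_nonneg
  calc ∑ x ∈ 𝒮.net i, dist x (𝒮.center i j x)
      ≤ #(𝒮.net i) * (2 * T * (D / 2 ^ i)) := 𝒮.sum_dist_center_le_card_mul i j
    _ = 32 * T * (#(𝒮.net i) * (D / 2 ^ i / 8 / 2)) := by ring
    _ ≤ 32 * T * mstWeight X := by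
        gcongr
        exact card_mul_le_mstWeight h (𝒮.separated i)

lemma graphWeight_graph_le [Fintype X] {a : ℕ} (𝒮 : StarSystem X (mstWeight X) T m) (hT : 0 ≤ T)
    (ha : Fintype.card X ≤ 2 ^ a) (J : ℕ) :
    graphWeight (𝒮.graph (a + J)) ≤ m * (32 * T * mstWeight X * (a + 2)) := by
  have hmst : 0 ≤ mstWeight X := mstWeight_nonneg
  have hassignment : ∀ j, ∑ i ∈ Finset.range (a + J), ∑ x ∈ 𝒮.net i, dist x (𝒮.center i j x) ≤
      32 * T * mstWeight X * (a + 2) := fun j => by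
    refine sum_range_add_le_mul_add_two (n := Fintype.card X) (by positivity)
      (by exact_mod_cast ha) (fun i => 𝒮.sum_dist_center_le_mstWeight hT i j) (fun i => ?_) J
    calc ∑ x ∈ 𝒮.net i, dist x (𝒮.center i j x)
        ≤ #(𝒮.net i) * (2 * T * (mstWeight X / 2 ^ i)) := 𝒮.sum_dist_center_le_card_mul i j
      _ ≤ Fintype.card X * (32 * T * (mstWeight X / 2 ^ i)) := by
          gcongr
          · exact Finset.card_le_univ _
          · norm_num
      _ = Fintype.card X * (32 * T * mstWeight X / 2 ^ i) := by ring
  refine (𝒮.graphWeight_graph_le_sum _).trans ?_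
  simpa using Finset.sum_le_card_nsmul Finset.univ _ _ fun j _ => hassignment j

lemma exists_walk_center [Fintype X] {I i : ℕ} (hi : i < I) (j : Fin m) {x : X}
    (hx : x ∈ 𝒮.net i) :
    ∃ w : (𝒮.graph I).Walk x (𝒮.center i j x), walkWeight w ≤ 2 * T * (D / 2 ^ i) := by
  have hle := 𝒮.dist_center_le j hx
  rcases eq_or_ne (𝒮.center i j x) x with heq | hne
  · rw [heq, dist_self] at hle
    rw [heq]
    exact ⟨SimpleGraph.Walk.nil, walkWeight_nil.trans_le hle⟩
  · have hadj : (𝒮.graph I).Adj x (𝒮.center i j x) := by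
      classical
      rw [graph, SimpleGraph.fromEdgeSet_adj]
      exact ⟨Finset.mem_image_of_mem 𝒮.spokeEdge (𝒮.mem_spokes.2 ⟨hi, hx, hne⟩), hne.symm⟩
    exact ⟨hadj.toWalk, (walkWeight_toWalk hadj).trans_le hle⟩

lemma exists_walk_of_mem_net [Fintype X] {I i : ℕ} (hi : i < I) {x y : X} (hx : x ∈ 𝒮.net i)
    (hy : y ∈ 𝒮.net i) (hxy : dist x y ≤ 2 * (D / 2 ^ i)) :
    ∃ w : (𝒮.graph I).Walk x y, walkWeight w ≤ 4 * T * (D / 2 ^ i) := by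
  obtain ⟨j, hj⟩ := 𝒮.exists_center_eq hx hy hxy
  obtain ⟨wx, hwx⟩ := 𝒮.exists_walk_center hi j hx
  obtain ⟨wy, hwy⟩ : ∃ w : (𝒮.graph I).Walk y (𝒮.center i j x),
      walkWeight w ≤ 2 * T * (D / 2 ^ i) := hj ▸ 𝒮.exists_walk_center hi j hy
  refine ⟨wx.append wy.reverse, ?_⟩
  rw [walkWeight_append, walkWeight_reverse]
  linarith

/-- A pair at distance about `D / 2 ^ i` is joined by walking inside the star of two nearby net
points, which the finer scales connect to `x` and `y`. -/
lemma exists_walk_graph_le [Fintype X] {I : ℕ} (hT : 0 ≤ T) (hdiam : ∀ x y : X, dist x y ≤ D)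
    (hI : ∀ x y : X, dist x y ≤ D / 2 ^ I → x = y) (x y : X) :
    ∃ w : (𝒮.graph I).Walk x y, walkWeight w ≤ 16 * T * dist x y := by
  suffices hscale : ∀ i ≤ I, ∀ x y : X, dist x y ≤ D / 2 ^ i →
      ∃ w : (𝒮.graph I).Walk x y, walkWeight w ≤ 16 * T * dist x y from
    hscale 0 (Nat.zero_le I) x y (by simpa using hdiam x y)
  intro i hiI
  induction hiI using Nat.decreasingInduction with
  | self =>
    intro x y hxy
    obtain rfl := hI x y hxy
    exact ⟨SimpleGraph.Walk.nil, by simp [walkWeight_nil]⟩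
  | of_succ i hi ih =>
    intro x y hxy
    rcases le_or_gt (dist x y) (D / 2 ^ (i + 1)) with hclose | hfar
    · exact ih x y hclose
    have hhalf : D / 2 ^ (i + 1) = D / 2 ^ i / 2 := by rw [pow_succ, div_div]
    rw [hhalf] at ih hfar
    obtain ⟨x', hx', hxx'⟩ := 𝒮.exists_dist_lt i x
    obtain ⟨y', hy', hyy'⟩ := 𝒮.exists_dist_lt i y
    have : 0 ≤ dist x x' := dist_nonneg
    obtain ⟨wx, hwx⟩ := ih x x' (by linarith)
    obtain ⟨wy, hwy⟩ := ih y y' (by linarith)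
    obtain ⟨w, hw⟩ := 𝒮.exists_walk_of_mem_net hi hx' hy' (by
      linarith [dist_triangle4 x' x y y', dist_comm x x'])
    refine ⟨wx.append (w.append wy.reverse), ?_⟩
    rw [walkWeight_append, walkWeight_append, walkWeight_reverse]
    calc walkWeight wx + (walkWeight w + walkWeight wy)
        ≤ 16 * T * dist x x' + (4 * T * (D / 2 ^ i) + 16 * T * dist y y') := by gcongr
      _ ≤ 16 * T * (D / 2 ^ i / 8) + (4 * T * (D / 2 ^ i) + 16 * T * (D / 2 ^ i / 8)) := by
          gcongr
      _ = 16 * T * (D / 2 ^ i / 2) := by ring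
      _ ≤ 16 * T * dist x y := by gcongr

lemma isSpanner_graph [Fintype X] {I : ℕ} (hT : 0 ≤ T) (hdiam : ∀ x y : X, dist x y ≤ D)
    (hI : ∀ x y : X, dist x y ≤ D / 2 ^ I → x = y) : IsSpanner (𝒮.graph I) (16 * T) :=
  isSpanner_of_forall_exists_walk (𝒮.exists_walk_graph_le hT hdiam hI)

end StarSystem

lemma eventually_forall_dist_le_div_two_pow (X : Type*) [MetricSpace X] [Finite X] (D : ℝ) :
    ∀ᶠ I : ℕ in Filter.atTop, ∀ x y : X, dist x y ≤ D / 2 ^ I → x = y := by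
  simp only [Filter.eventually_all]
  intro x y
  rcases eq_or_ne x y with rfl | hxy
  · exact Filter.Eventually.of_forall fun _ _ => rfl
  have hlim : Filter.Tendsto (fun I : ℕ => D / 2 ^ I) Filter.atTop (nhds 0) :=
    tendsto_const_nhds.div_atTop (tendsto_pow_atTop_atTop_of_one_lt one_lt_two)
  filter_upwards [hlim.eventually_lt_const (dist_pos.2 hxy)] with I hI hle
  exact absurd hle hI.not_ge

lemma exists_isSpanner_of_hasPartitionCover {X : Type*} [MetricSpace X] [Fintype X] [Nontrivial X]
    {T : ℝ} {m l : ℕ} (hT : 0 ≤ T) (hl : 16 * T < 2 ^ l)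
    (hcover : ∀ Δ, 0 < Δ → HasPartitionCover X m (T * Δ) Δ) :
    ∃ H : SimpleGraph X, IsSpanner H (16 * T) ∧
      graphWeight H ≤ m * (32 * T * mstWeight X * (Nat.clog 2 (Fintype.card X) + 2)) ∧
      edgeCount H ≤ m * (l * Fintype.card X) := by
  obtain ⟨𝒮⟩ := nonempty_starSystem (mstWeight_pos (X := X)) hcover
  obtain ⟨I, hI, haI⟩ := ((eventually_forall_dist_le_div_two_pow X (mstWeight X)).and
    (Filter.eventually_ge_atTop (Nat.clog 2 (Fintype.card X)))).exists
  obtain ⟨J, rfl⟩ := Nat.exists_eq_add_of_le haI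
  exact ⟨𝒮.graph _, 𝒮.isSpanner_graph hT dist_le_mstWeight hI,
    𝒮.graphWeight_graph_le hT (Nat.le_pow_clog one_lt_two _) J,
    𝒮.edgeCount_graph_le mstWeight_pos hl _⟩

end StarSystem

section SnowflakeSpanner

lemma natCast_mul_half_le {k : ℕ} {y : ℝ} (h : (2 : ℝ) ^ k ≤ y) : (k : ℝ) / 2 ≤ Real.log y := by
  have hlog := Real.log_le_log (by positivity) h
  rw [Real.log_pow] at hlog
  have := Real.log_two_gt_d9
  calc (k : ℝ) / 2 = k * (1 / 2) := by ring
    _ ≤ k * Real.log 2 := by gcongr; linarith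
    _ ≤ Real.log y := hlog

lemma clog_add_two_le_log {n : ℕ} (hn : 2 ≤ n) : (Nat.clog 2 n : ℝ) + 2 ≤ 8 * Real.log n := by
  have hlog : Real.log 2 ≤ Real.log n := Real.log_le_log two_pos (by exact_mod_cast hn)
  have := Real.log_two_gt_d9
  obtain ⟨k, hk⟩ := Nat.exists_eq_succ_of_ne_zero (Nat.clog_pos one_lt_two hn).ne'
  have hpow := Nat.pow_pred_clog_lt_self one_lt_two hn
  rw [hk, Nat.pred_succ] at hpow
  have hk' : (k : ℝ) / 2 ≤ Real.log n := natCast_mul_half_le (by exact_mod_cast hpow.le)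
  rw [hk, Nat.cast_succ]
  linarith

lemma exists_lt_two_pow_le_log {K t : ℝ} (hK : 1 ≤ K) (hKt : K ≤ t) (ht : Real.exp 1 ≤ t) :
    ∃ l : ℕ, 32 * (K * t) < 2 ^ l ∧ (l : ℝ) ≤ 15 * Real.log t := by
  have ht0 : 0 < t := (Real.exp_pos 1).trans_le ht
  have hlog : 1 ≤ Real.log t := (Real.le_log_iff_exp_le ht0).2 ht
  have hKt1 : 1 ≤ K * t := one_le_mul_of_one_le_of_one_le hK (hK.trans hKt)
  obtain ⟨k, hle, hlt⟩ := exists_nat_pow_near (x := 32 * (K * t)) (y := 2) (by linarith) one_lt_two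
  refine ⟨k + 1, hlt, ?_⟩
  have hk : (k : ℝ) / 2 ≤ Real.log 32 + (Real.log K + Real.log t) := by
    rw [← Real.log_mul (by positivity) ht0.ne', ← Real.log_mul (by positivity) (by positivity)]
    exact natCast_mul_half_le hle
  have hlogK : Real.log K ≤ Real.log t := Real.log_le_log (by positivity) hKt
  have hlog32 : Real.log 32 = 5 * Real.log 2 := by
    rw [show (32 : ℝ) = 2 ^ 5 by norm_num, Real.log_pow, Nat.cast_ofNat]
  push_cast
  linarith [Real.log_two_lt_d9]

lemma HasEuclideanSnowflake.exists_isSpanner {X : Type*} [MetricSpace X] [Fintype X] [Nontrivial X]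
    {p A K t : ℝ} (h : HasEuclideanSnowflake X p A) (hp : 0 ≤ p) (hK : 1 ≤ K)
    (hKA : 64 * A ≤ K ^ p) (hKt : K ≤ t) (ht : Real.exp 1 ≤ t) :
    ∃ H : SimpleGraph X, IsSpanner H (32 * K * t) ∧
      graphWeight H ≤ 25600 * K * t * (Fintype.card X : ℝ) ^ (1 / (2 * t ^ p)) *
        Real.log (Fintype.card X) ^ 2 * mstWeight X ∧
      (edgeCount H : ℝ) ≤ 750 * (Fintype.card X : ℝ) ^ (1 + 1 / (2 * t ^ p)) *
        Real.log (Fintype.card X) * Real.log t := by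
  have ht0 : 0 < t := (Real.exp_pos 1).trans_le ht
  have hK0 : 0 < K := one_pos.trans_le hK
  have hX : 2 ≤ Fintype.card X := Fintype.one_lt_card
  have hτ : 64 * A * t ^ p ≤ (K * t) ^ p := by
    rw [Real.mul_rpow hK0.le ht0.le]
    gcongr
  obtain ⟨m, hm, hcover⟩ := h.exists_hasPartitionCover hX hp
    (Real.one_le_rpow (hK.trans hKt) hp) (mul_pos hK0 ht0) hτ
  obtain ⟨l, hl, hlt⟩ := exists_lt_two_pow_le_log hK hKt ht
  obtain ⟨H, hspan, hweight, hedges⟩ := exists_isSpanner_of_hasPartitionCover (X := X)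
    (T := 2 * (K * t)) (m := m) (l := l) (by positivity) (by linarith)
    (by simpa only [mul_assoc] using hcover)
  have hn : (0 : ℝ) < Fintype.card X := by positivity
  have hmst : 0 ≤ mstWeight X := mstWeight_nonneg
  refine ⟨H, hspan.mono (by linarith), ?_, ?_⟩
  · calc graphWeight H
        ≤ m * (32 * (2 * (K * t)) * mstWeight X * (Nat.clog 2 (Fintype.card X) + 2)) := hweight
      _ ≤ 50 * Real.log (Fintype.card X) * (Fintype.card X : ℝ) ^ (1 / (2 * t ^ p)) *
          (32 * (2 * (K * t)) * mstWeight X * (8 * Real.log (Fintype.card X))) := by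
        gcongr
        exact clog_add_two_le_log hX
      _ = _ := by ring
  · calc (edgeCount H : ℝ) ≤ m * (l * Fintype.card X) := by exact_mod_cast hedges
      _ ≤ 50 * Real.log (Fintype.card X) * (Fintype.card X : ℝ) ^ (1 / (2 * t ^ p)) *
          (15 * Real.log t * Fintype.card X) := by gcongr
      _ = _ := by
        rw [Real.rpow_add hn, Real.rpow_one]
        ring

lemma isSpanner_bot {X : Type*} [MetricSpace X] [Subsingleton X] (t : ℝ) :
    IsSpanner (⊥ : SimpleGraph X) t :=
  isSpanner_of_forall_exists_walk fun x y => by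
    obtain rfl := Subsingleton.elim x y
    exact ⟨SimpleGraph.Walk.nil, by simp [walkWeight_nil]⟩

lemma graphWeight_bot {X : Type*} [MetricSpace X] [Fintype X] :
    graphWeight (⊥ : SimpleGraph X) = 0 := by
  simp [graphWeight]

lemma edgeCount_bot {V : Type*} : edgeCount (⊥ : SimpleGraph V) = 0 := by
  simp [edgeCount]

lemma rpow_mul_log_le {x a b : ℝ} (hx : 1 ≤ x) (ha : 0 < a) (hb : b ≤ a / 2) :
    x ^ b * Real.log x ≤ 2 / a * x ^ a :=
  calc x ^ b * Real.log x ≤ x ^ (a / 2) * (x ^ (a / 2) / (a / 2)) := by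
        gcongr
        · exact Real.log_nonneg hx
        · exact Real.log_le_rpow_div (by linarith) (half_pos ha)
    _ = 2 / a * (x ^ (a / 2) * x ^ (a / 2)) := by field_simp
    _ = 2 / a * x ^ a := by rw [← Real.rpow_add (by linarith), add_halves]

lemma one_div_two_mul_le_log_sq_div {t p : ℝ} (ht : Real.exp 1 ≤ t) :
    1 / (2 * t ^ p) ≤ Real.log t ^ 2 / t ^ p / 2 := by
  have ht0 : 0 < t := (Real.exp_pos 1).trans_le ht
  have hlog : 1 ≤ Real.log t := (Real.le_log_iff_exp_le ht0).2 ht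
  rw [div_div, mul_comm (t ^ p)]
  gcongr
  exact one_le_pow₀ hlog

/-- Half of the exponent `log² t / t ^ p` pays for trading one factor `log n` for
`t ^ p / log² t`. -/
lemma HasEuclideanSnowflake.exists_isSpanner_rpow {X : Type*} [MetricSpace X] [Fintype X]
    {p A K t : ℝ} (h : HasEuclideanSnowflake X p A) (hp : 0 ≤ p) (hK : 1 ≤ K)
    (hKA : 64 * A ≤ K ^ p) (hKt : K ≤ t) (ht : Real.exp 1 ≤ t) :
    ∃ H : SimpleGraph X, IsSpanner H (51200 * K * t) ∧
      graphWeight H ≤ 51200 * K * (t ^ (1 + p) / Real.log t ^ 2) *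
        (Fintype.card X : ℝ) ^ (Real.log t ^ 2 / t ^ p) * Real.log (Fintype.card X) *
        mstWeight X ∧
      (edgeCount H : ℝ) ≤ 51200 * K * (Fintype.card X : ℝ) ^ (1 + Real.log t ^ 2 / t ^ p) *
        Real.log (Fintype.card X) * Real.log t := by
  have ht0 : 0 < t := (Real.exp_pos 1).trans_le ht
  have hlog : 0 < Real.log t := one_pos.trans_le ((Real.le_log_iff_exp_le ht0).2 ht)
  rcases subsingleton_or_nontrivial X with hX | hX
  · have hlogX : Real.log (Fintype.card X) = 0 := by
      have := Fintype.card_le_one_iff_subsingleton.2 hX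
      interval_cases Fintype.card X <;> simp
    exact ⟨⊥, isSpanner_bot _, by simp [graphWeight_bot, hlogX], by simp [edgeCount_bot, hlogX]⟩
  obtain ⟨H, hspan, hweight, hedges⟩ := h.exists_isSpanner hp hK hKA hKt ht
  set n := (Fintype.card X : ℝ)
  set a := Real.log t ^ 2 / t ^ p with ha
  have hn : 1 ≤ n := Nat.one_le_cast.2 Fintype.card_pos
  have : 0 ≤ Real.log n := Real.log_nonneg hn
  have hmst : 0 ≤ mstWeight X := mstWeight_nonneg
  have ha0 : 0 < a := by positivity
  have hexp : 1 / (2 * t ^ p) ≤ a / 2 := one_div_two_mul_le_log_sq_div ht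
  have hta : t ^ (1 + p) / Real.log t ^ 2 = t / a := by
    rw [Real.rpow_add ht0, Real.rpow_one, ha, div_div_eq_mul_div]
  refine ⟨H, hspan.mono (by gcongr; norm_num), hweight.trans ?_, hedges.trans ?_⟩
  · calc 25600 * K * t * n ^ (1 / (2 * t ^ p)) * Real.log n ^ 2 * mstWeight X
        = 25600 * K * t * (n ^ (1 / (2 * t ^ p)) * Real.log n) * Real.log n * mstWeight X := by ring
      _ ≤ 25600 * K * t * (2 / a * n ^ a) * Real.log n * mstWeight X := by
          gcongr ?_ * _ * _
          exact mul_le_mul_of_nonneg_left (rpow_mul_log_le hn ha0 hexp) (by positivity)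
      _ = 51200 * K * (t ^ (1 + p) / Real.log t ^ 2) * n ^ a * Real.log n * mstWeight X := by
          rw [hta]
          ring
  · gcongr
    · linarith
    · linarith

end SnowflakeSpanner

theorem lp_light_spanner_general (p : ℝ) (hp2 : p ≤ 2) (ι : Type*)
    [Fact (1 ≤ ENNReal.ofReal p)] :
    ∃ (C t₀ : ℝ), 0 < C ∧ 1 < t₀ ∧
      ∀ t : ℝ, t₀ ≤ t →
      ∀ s : Finset (lp (fun _ : ι => ℝ) (ENNReal.ofReal p)),
        ∃ H : SimpleGraph ↥s,
          IsSpanner H (C * t) ∧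
          graphWeight H ≤
            C * (t ^ (1 + p) / Real.log t ^ 2) *
              (s.card : ℝ) ^ (Real.log t ^ 2 / t ^ p) * Real.log s.card * mstWeight ↥s ∧
          (edgeCount H : ℝ) ≤
            C * (s.card : ℝ) ^ (1 + Real.log t ^ 2 / t ^ p) *
              Real.log s.card * Real.log t := by
  have hp : 0 < p := one_pos.trans_le (ENNReal.one_le_ofReal.1 Fact.out)
  obtain ⟨A, hsnowflake⟩ := exists_hasEuclideanSnowflake_lp hp2 ι
  obtain ⟨K, hKA, hK⟩ := (((tendsto_rpow_atTop hp).eventually_ge_atTop (64 * A)).and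
    (Filter.eventually_ge_atTop 1)).exists
  refine ⟨51200 * K, max (Real.exp 1) K, by positivity,
    lt_max_of_lt_left (Real.one_lt_exp_iff.2 one_pos), fun t ht s => ?_⟩
  obtain ⟨hte, hKt⟩ := max_le_iff.1 ht
  obtain ⟨H, hspan, hweight, hedges⟩ :=
    (hsnowflake s).exists_isSpanner_rpow hp.le hK hKA hKt hte
  rw [Fintype.card_coe] at hweight hedges
  exact ⟨H, hspan, hweight, hedges⟩

/-- For every constant `p ∈ (1,2)`, every set of `n` points in `ℓ_p` and
every sufficiently large `t > 1`, there is an `O(t)`-spanner with lightness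
`O((t^{1+p}/log² t)·n^{(log² t)/t^p}·log n)` and `O(n^{1+(log² t)/t^p}·log n·log t)` edges. -/
theorem lp_light_spanner (p : ℝ) (hp1 : 1 < p) (hp2 : p < 2)
    [Fact (1 ≤ ENNReal.ofReal p)] :
    ∃ (C t₀ : ℝ), 0 < C ∧ 1 < t₀ ∧
      ∀ t : ℝ, t₀ ≤ t →
      ∀ s : Finset (lp (fun _ : ℕ => ℝ) (ENNReal.ofReal p)),
        ∃ H : SimpleGraph ↥s,
          IsSpanner H (C * t) ∧
          graphWeight H ≤
            C * (t ^ (1 + p) / Real.log t ^ 2) *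
              (s.card : ℝ) ^ (Real.log t ^ 2 / t ^ p) * Real.log s.card * mstWeight ↥s ∧
          (edgeCount H : ℝ) ≤
            C * (s.card : ℝ) ^ (1 + Real.log t ^ 2 / t ^ p) *
              Real.log s.card * Real.log t :=
  lp_light_spanner_general p hp2.le ℕ
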